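/- arXiv:2605.24955 — 2 statements merged into one kernel-verified Lean document; each statement's English description precedes it below -/
import Mathlib

section
/- Bias of fast CUR under SRHT (Corollary F.3, bias part): There exist absolute constants C₀ > 0 and C' > 0 such that the following holds. Let n ≥ 3 and p ≥ 3, let X, C, R be as in the CUR model with Cᵀ C and R Rᵀ invertible, let H_n and H_p be Hadamard matrices of sizes n and p, and let α_c, α_r > 0 be such that for every sign vector ξ, every nonzero row of C_HD(ξ) satisfies ‖(C_HD(ξ))_i‖²/‖C_HD(ξ)‖_F² ≥ n^{−α_c}, and for every sign vector η, every nonzero row of R_HDᵀ(η) satisfies ‖(R_HDᵀ(η))_j‖²/‖R_HDᵀ(η)‖_F² ≥ p^{−α_r}. For every δ with max{n·exp(−c), p·exp(−r)} < δ ≤ min{n^{−(3+α_c)}, p^{−(3+α_r)}} and all m_c ≥ C₀ c log(c/δ), m_r ≥ C₀ r log(r/δ), there exists an event ζ in the joint sample space with P(ζ) ≥ 1 − δ on which all inverted matrices in Ũ are invertible, such that Bias_ζ(Ũ) ≤ ε² · L(U_CUR), where ε = C' · ((log n/log log n)√(c³/m_c³) + √(c·log(n/δ))/m_c + (log p/log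 log p)√(r³/m_r³) + √(r·log(p/δ))/m_r). -/
/-!
Write `C = V T` and `Rᵀ = W S` with `V`, `W` having orthonormal columns. On the event where both
sampled Gram matrices are invertible, the estimator is `T⁻¹ (M X Lᵀ) S⁻ᵀ`, where `M` and `L` are the
sketched pseudo-inverses of `V` and `W` (`curUsrht_eq`); these satisfy `M V = 1` and `L W = 1`. The
event `ζ` is a product of two one-sided good events, and the joint law is uniform, so `E_ζ[Ũ]` is
given by the same formula with `M`, `L` replaced by their averages (`average_two_sided`). If `N` is
the residual of `U_CUR`, then `Vᵀ N W = 0` and the excess loss equals `‖M N Lᵀ‖²` by Pythagoras. It is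
therefore quadratically small once the averaged `M` and `L` are small on the orthogonal complements
of the ranges of `V` and `W` (`loss_perturbation`).

The one-sided estimate (`one_sided`) is a bias bound for sketched least squares. Let `xᵢ` be the rows
of `H D(ξ) V`, which are isotropic, and let `b = H D(ξ) v` with `Vᵀ v = 0`, so that `∑ bᵢ xᵢ = 0`.
Resampling one drawn row with the others fixed, the Sherman–Morrison formula turns its contribution
into `E_i[uᵀ M⁻¹ xᵢ bᵢ / (1 + xᵢᵀ M⁻¹ xᵢ / m)]`, with `M` now the Gram matrix of the other rows. With the
denominator replaced by `1 + c / m` this vanishes, hence only second-order errors remain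
(`loo_step`, `loo_bias`):

* the deviation of the Gram matrix from the identity. Its mean operator norm is of order
  `√(c log n / m)`, by trace moments of order about `log n`, which are bounded through exchangeable
  pairs (`moment_recursion`, `expect_norm_bound`). This gives the term `√(log n) √(c³ / m³)`, and
  `√(log n) ≤ 2 log n / log log n`;
* the fluctuation of `‖xᵢ‖²` around `c`. It is a Rademacher quadratic form of variance at most `2 c`,
  which gives the term `√c / m` (`expect_triple_le`).

The good event asks that all `‖xᵢ‖² ≤ 10 c` and that the Gram deviation is at most `1 / 4`. The first
fails with probability at most `n exp(-2 c)` (`row_tail`, through a Gaussian linearisation of the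
exponential moment of `‖xᵢ‖²`). For the second, moments of order about `4 log(c/δ)` bound the failure
probability by `δ² / c` and also by a multiple of `log(c/δ) δ² / m` (`tail_bound`, `tail_numeric`). The
second form makes the truncation error negligible, because `δ ≤ n⁻³`.
-/

open Matrix Finset

noncomputable section

/-- Probability of the i.i.d. sample `ω` of `m` draws from the sampling
distribution `π` (pmf of the product measure on `Ω = Fin m → Fin n`). -/
def samplingP {n : ℕ} (π : Fin n → ℝ) {m : ℕ} (ω : Fin m → Fin n) : ℝ :=
  ∏ s, π (ω s)

/-- The sampling matrix `S(ω) ∈ ℝ^{m×n}` with `S(ω)_{s,j} = 1/√(m π_{ω s})` if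
`j = ω s` and `0` otherwise. -/
def samplingS {n : ℕ} (π : Fin n → ℝ) {m : ℕ} (ω : Fin m → Fin n) :
    Matrix (Fin m) (Fin n) ℝ :=
  Matrix.of fun s j => if j = ω s then 1 / Real.sqrt (m * π (ω s)) else 0

/-- The `i`-th leverage score `ℓ_i(X) = x_iᵀ (Xᵀ X)⁻¹ x_i`. -/
def lev {n p : ℕ} (X : Matrix (Fin n) (Fin p) ℝ) (i : Fin n) : ℝ :=
  X i ⬝ᵥ ((Xᵀ * X)⁻¹ *ᵥ X i)

/-- Maximum importance sampling approximation factor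
`θ_max(X) = max_i ℓ_i(X)/(p π_i)`. -/
def thetaMax {n p : ℕ} (X : Matrix (Fin n) (Fin p) ℝ) (π : Fin n → ℝ) : ℝ :=
  ⨆ i, lev X i / (p * π i)

/-- Probability of an event `ζ` relative to the pmf `P`. -/
def eventProb {Ω : Type*} (P : Ω → ℝ) (ζ : Finset Ω) : ℝ :=
  ∑ ω ∈ ζ, P ω

/-- Conditional expectation `E_ζ[f] = P(ζ)⁻¹ ∑_{ω ∈ ζ} P(ω) f(ω)`. -/
def condExp {Ω V : Type*} [AddCommMonoid V] [Module ℝ V]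
    (P : Ω → ℝ) (ζ : Finset Ω) (f : Ω → V) : V :=
  (eventProb P ζ)⁻¹ • ∑ ω ∈ ζ, P ω • f ω

/-- Frobenius norm `‖A‖_F = √(trace (Aᵀ A))`. -/
def frobNorm {k l : ℕ} (A : Matrix (Fin k) (Fin l) ℝ) : ℝ :=
  Real.sqrt ((Aᵀ * A).trace)

/-- Loewner order: `A ⪯ B` iff `B − A` is positive semidefinite. -/
def loewnerLE {k : ℕ} (A B : Matrix (Fin k) (Fin k) ℝ) : Prop :=
  (B - A).PosSemidef

/-- CUR reconstruction loss `L(U) = ‖C U R − X‖_F²`. -/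
def lossCUR {n p c r : ℕ} (X : Matrix (Fin n) (Fin p) ℝ)
    (Cm : Matrix (Fin n) (Fin c) ℝ) (Rm : Matrix (Fin r) (Fin p) ℝ)
    (U : Matrix (Fin c) (Fin r) ℝ) : ℝ :=
  frobNorm (Cm * U * Rm - X) ^ 2

/-- The optimal core matrix `U_CUR = (Cᵀ C)⁻¹ Cᵀ X Rᵀ (R Rᵀ)⁻¹`. -/
def optCUR {n p c r : ℕ} (X : Matrix (Fin n) (Fin p) ℝ)
    (Cm : Matrix (Fin n) (Fin c) ℝ) (Rm : Matrix (Fin r) (Fin p) ℝ) :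
    Matrix (Fin c) (Fin r) ℝ :=
  (Cmᵀ * Cm)⁻¹ * Cmᵀ * X * Rmᵀ * (Rm * Rmᵀ)⁻¹

/-- Joint pmf on the CUR sample space
`Ω = (Fin m_c → Fin n) × (Fin m_r → Fin p)`. -/
def curP {n p mc mr : ℕ} (πC : Fin n → ℝ) (πR : Fin p → ℝ)
    (ω : (Fin mc → Fin n) × (Fin mr → Fin p)) : ℝ :=
  samplingP πC ω.1 * samplingP πR ω.2

/-- Sign associated to a Boolean: `true ↦ 1`, `false ↦ −1`. -/
def sgn (b : Bool) : ℝ := if b then 1 else -1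

/-- Diagonal sign matrix `D(ξ)` of a sign vector `ξ`. -/
def Dsgn {n : ℕ} (ξ : Fin n → Bool) : Matrix (Fin n) (Fin n) ℝ :=
  Matrix.diagonal fun i => sgn (ξ i)

/-- Joint pmf for SRHT fast CUR: uniform i.i.d. column-side and row-side
sampling together with independent uniform sign vectors on both sides. -/
def curSrhtP (n p mc mr : ℕ)
    (z : (Fin mc → Fin n) × (Fin mr → Fin p) × (Fin n → Bool) × (Fin p → Bool)) :
    ℝ :=
  samplingP (fun _ => (n : ℝ)⁻¹) z.1 * samplingP (fun _ => (p : ℝ)⁻¹) z.2.1 *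
    (1 / 2 : ℝ) ^ n * (1 / 2 : ℝ) ^ p

/-- `C_HD(ξ) = H_n D(ξ) C / √n`. -/
def CHD {n c : ℕ} (Hn : Matrix (Fin n) (Fin n) ℝ)
    (Cm : Matrix (Fin n) (Fin c) ℝ) (ξ : Fin n → Bool) :
    Matrix (Fin n) (Fin c) ℝ :=
  (Real.sqrt n)⁻¹ • (Hn * Dsgn ξ * Cm)

/-- `R_HDᵀ(η) = H_p D(η) Rᵀ / √p`. -/
def RHDT {p r : ℕ} (Hp : Matrix (Fin p) (Fin p) ℝ)
    (Rm : Matrix (Fin r) (Fin p) ℝ) (η : Fin p → Bool) :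
    Matrix (Fin p) (Fin r) ℝ :=
  (Real.sqrt p)⁻¹ • (Hp * Dsgn η * Rmᵀ)

/-- `X̃ = S_C H_n D(ξ) X D(η) H_pᵀ S_Rᵀ / √(n p)`. -/
def XtilSRHT {n p mc mr : ℕ} (Hn : Matrix (Fin n) (Fin n) ℝ)
    (Hp : Matrix (Fin p) (Fin p) ℝ) (X : Matrix (Fin n) (Fin p) ℝ)
    (z : (Fin mc → Fin n) × (Fin mr → Fin p) × (Fin n → Bool) × (Fin p → Bool)) :
    Matrix (Fin mc) (Fin mr) ℝ :=
  (Real.sqrt ((n : ℝ) * p))⁻¹ •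
    (samplingS (fun _ => (n : ℝ)⁻¹) z.1 * Hn * Dsgn z.2.2.1 * X *
      Dsgn z.2.2.2 * Hpᵀ * (samplingS (fun _ => (p : ℝ)⁻¹) z.2.1)ᵀ)

/-- SRHT fast CUR estimator
`Ũ = ((S_C C_HD)ᵀ S_C C_HD)⁻¹ (S_C C_HD)ᵀ X̃ S_R R_HDᵀ (R_HD S_Rᵀ S_R R_HDᵀ)⁻¹`. -/
def curUsrht {n p c r mc mr : ℕ} (Hn : Matrix (Fin n) (Fin n) ℝ)
    (Hp : Matrix (Fin p) (Fin p) ℝ) (X : Matrix (Fin n) (Fin p) ℝ)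
    (Cm : Matrix (Fin n) (Fin c) ℝ) (Rm : Matrix (Fin r) (Fin p) ℝ)
    (z : (Fin mc → Fin n) × (Fin mr → Fin p) × (Fin n → Bool) × (Fin p → Bool)) :
    Matrix (Fin c) (Fin r) ℝ :=
  ((samplingS (fun _ => (n : ℝ)⁻¹) z.1 * CHD Hn Cm z.2.2.1)ᵀ *
      (samplingS (fun _ => (n : ℝ)⁻¹) z.1 * CHD Hn Cm z.2.2.1))⁻¹ *
    (samplingS (fun _ => (n : ℝ)⁻¹) z.1 * CHD Hn Cm z.2.2.1)ᵀ *
    XtilSRHT Hn Hp X z *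
    (samplingS (fun _ => (p : ℝ)⁻¹) z.2.1 * RHDT Hp Rm z.2.2.2) *
    ((RHDT Hp Rm z.2.2.2)ᵀ * (samplingS (fun _ => (p : ℝ)⁻¹) z.2.1)ᵀ *
      samplingS (fun _ => (p : ℝ)⁻¹) z.2.1 * RHDT Hp Rm z.2.2.2)⁻¹

/-! ### Trace inequalities for symmetric matrices -/

section

/-- Orthogonal diagonalisation of a real symmetric matrix, in the form of one spectral formula for
all powers. -/
theorem exists_spectral {c : ℕ} {A : Matrix (Fin c) (Fin c) ℝ} (hA : Aᵀ = A) :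
    ∃ (U : Matrix (Fin c) (Fin c) ℝ) (d : Fin c → ℝ), Uᵀ * U = 1 ∧ U * Uᵀ = 1 ∧
      ∀ k : ℕ, A ^ k = U * diagonal (fun a => d a ^ k) * Uᵀ := by
  have hH : A.IsHermitian := by
    rw [Matrix.IsHermitian, conjTranspose_eq_transpose_of_trivial, hA]
  have h1 : (hH.eigenvectorUnitary : Matrix (Fin c) (Fin c) ℝ)ᵀ *
      (hH.eigenvectorUnitary : Matrix (Fin c) (Fin c) ℝ) = 1 := by
    have := (Unitary.mem_iff.mp hH.eigenvectorUnitary.2).1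
    rwa [star_eq_conjTranspose, conjTranspose_eq_transpose_of_trivial] at this
  have h2 := mul_eq_one_comm.mp h1
  have h3 := hH.spectral_theorem
  rw [Unitary.conjStarAlgAut_apply, star_eq_conjTranspose,
    conjTranspose_eq_transpose_of_trivial] at h3
  refine ⟨hH.eigenvectorUnitary, hH.eigenvalues, h1, h2, fun k => ?_⟩
  have h4 : (RCLike.ofReal ∘ hH.eigenvalues : Fin c → ℝ) = hH.eigenvalues := by
    ext; simp
  rw [h4] at h3
  generalize (hH.eigenvectorUnitary : Matrix (Fin c) (Fin c) ℝ) = U at *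
  generalize hH.eigenvalues = d at *
  induction k with
  | zero => simp [h2]
  | succ k ih =>
    rw [pow_succ, ih]
    conv_lhs => rw [h3]
    have : U * diagonal (fun a => d a ^ k) * Uᵀ * (U * diagonal d * Uᵀ) =
        U * diagonal (fun a => d a ^ k) * (Uᵀ * U) * diagonal d * Uᵀ := by
      simp only [Matrix.mul_assoc]
    rw [this, h1, Matrix.mul_one, Matrix.mul_assoc U, diagonal_mul_diagonal]
    simp only [pow_succ]

/-- Joint diagonalisation formula for the mixed traces `tr (H Aⁱ H Bʲ)`. -/
theorem exists_trace_formula {c : ℕ} {A B H : Matrix (Fin c) (Fin c) ℝ} (hA : Aᵀ = A)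
    (hB : Bᵀ = B) (hH : Hᵀ = H) :
    ∃ (K : Matrix (Fin c) (Fin c) ℝ) (d e : Fin c → ℝ), ∀ i j : ℕ,
      (H * A ^ i * H * B ^ j).trace = ∑ a, ∑ b, K a b ^ 2 * (d a ^ i * e b ^ j) := by
  obtain ⟨U, d, hU, hU', hUA⟩ := exists_spectral hA
  obtain ⟨W, e, hW, hW', hWB⟩ := exists_spectral hB
  refine ⟨Uᵀ * H * W, d, e, fun i j => ?_⟩
  have h1 : (H * A ^ i * H * B ^ j).trace =
      ((Uᵀ * H * W)ᵀ * diagonal (fun a => d a ^ i) * (Uᵀ * H * W)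
        * diagonal (fun a => e a ^ j)).trace := by
    rw [hUA, hWB, transpose_mul, transpose_mul, hH, transpose_transpose]
    have : H * (U * diagonal (fun a => d a ^ i) * Uᵀ) * H *
        (W * diagonal (fun a => e a ^ j) * Wᵀ) =
        (H * U * diagonal (fun a => d a ^ i) * Uᵀ * H * W * diagonal (fun a => e a ^ j)) * Wᵀ := by
      simp only [Matrix.mul_assoc]
    rw [this, trace_mul_comm]
    simp only [Matrix.mul_assoc]
  rw [h1, trace, sum_comm]
  refine sum_congr rfl fun b _ => ?_
  rw [diag_apply, mul_diagonal, Matrix.mul_apply, sum_mul]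
  refine sum_congr rfl fun a _ => ?_
  rw [mul_diagonal, transpose_apply]
  ring

theorem mixed_pow_le {N i j : ℕ} (hN : Even N) (hij : i + j = N) (x y : ℝ) :
    x ^ i * y ^ j ≤ x ^ N + y ^ N := by
  have hx : x ^ N = |x| ^ N := (hN.pow_abs x).symm
  have hy : y ^ N = |y| ^ N := (hN.pow_abs y).symm
  have h0 : x ^ i * y ^ j ≤ |x| ^ i * |y| ^ j := by
    rw [← abs_pow, ← abs_pow, ← abs_mul]; exact le_abs_self _
  rw [hx, hy]
  refine h0.trans ?_
  rcases le_total |x| |y| with h | h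
  · calc |x| ^ i * |y| ^ j ≤ |y| ^ i * |y| ^ j := by gcongr
      _ = |y| ^ N := by rw [← pow_add, hij]
      _ ≤ _ := by have := pow_nonneg (abs_nonneg x) N; linarith
  · calc |x| ^ i * |y| ^ j ≤ |x| ^ i * |x| ^ j := by gcongr
      _ = |x| ^ N := by rw [← pow_add, hij]
      _ ≤ _ := by have := pow_nonneg (abs_nonneg y) N; linarith

/-- Mixed traces are dominated by the two pure ones: in the eigenbases of `A` and `B` this is
`mixed_pow_le` for every pair of eigenvalues. -/
theorem trace_mixed_le {c : ℕ} {A B H : Matrix (Fin c) (Fin c) ℝ} (hA : Aᵀ = A)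
    (hB : Bᵀ = B) (hH : Hᵀ = H) {N i j : ℕ} (hN : Even N) (hij : i + j = N) :
    (H * A ^ i * H * B ^ j).trace ≤ (H * A ^ N * H).trace + (H * B ^ N * H).trace := by
  obtain ⟨K, d, e, h⟩ := exists_trace_formula hA hB hH
  have h1 := h N 0
  have h2 := h 0 N
  rw [pow_zero, Matrix.mul_one] at h1 h2
  have h3 : (H * B ^ N * H).trace = (H * H * B ^ N).trace := by
    rw [trace_mul_comm, ← Matrix.mul_assoc]
  rw [h3, h, h1, h2, ← sum_add_distrib]
  refine sum_le_sum fun a _ => ?_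
  rw [← sum_add_distrib]
  refine sum_le_sum fun b _ => ?_
  have := mul_le_mul_of_nonneg_left (mixed_pow_le hN hij (d a) (e b)) (sq_nonneg (K a b))
  simp only [pow_zero, mul_one, one_mul]
  linarith

theorem pow_sub_pow_eq_sum {c : ℕ} (A B : Matrix (Fin c) (Fin c) ℝ) (k : ℕ) :
    A ^ (k + 1) - B ^ (k + 1) = ∑ i ∈ range (k + 1), A ^ i * (A - B) * B ^ (k - i) := by
  induction k with
  | zero => simp
  | succ k ih =>
    rw [sum_range_succ, Nat.sub_self, pow_zero, Matrix.mul_one]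
    have : ∑ i ∈ range (k + 1), A ^ i * (A - B) * B ^ (k + 1 - i) =
        (∑ i ∈ range (k + 1), A ^ i * (A - B) * B ^ (k - i)) * B := by
      rw [sum_mul]
      refine sum_congr rfl fun i hi => ?_
      rw [mem_range] at hi
      rw [show k + 1 - i = k - i + 1 by omega, pow_succ B, ← Matrix.mul_assoc]
    rw [this, ← ih, pow_succ A (k + 1), pow_succ B (k + 1)]
    noncomm_ring

/-- Mean value inequality for odd powers under the trace. -/
theorem trace_mvt {c : ℕ} {A B : Matrix (Fin c) (Fin c) ℝ} (hA : Aᵀ = A)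
    (hB : Bᵀ = B) {N : ℕ} (hN : Even N) :
    ((A - B) * (A ^ (N + 1) - B ^ (N + 1))).trace ≤
      (N + 1) * (((A - B) * A ^ N * (A - B)).trace + ((A - B) * B ^ N * (A - B)).trace) := by
  have hH : (A - B)ᵀ = A - B := by rw [transpose_sub, hA, hB]
  rw [pow_sub_pow_eq_sum, Finset.mul_sum, trace_sum]
  calc _ ≤ ∑ i ∈ range (N + 1), (((A - B) * A ^ N * (A - B)).trace
        + ((A - B) * B ^ N * (A - B)).trace) := by
        refine sum_le_sum fun i hi => ?_
        rw [mem_range] at hi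
        rw [← Matrix.mul_assoc, ← Matrix.mul_assoc]
        exact trace_mixed_le hA hB hH hN (by omega)
    _ = _ := by simp; ring

theorem trace_mul_transpose_nonneg {c d : ℕ} (M : Matrix (Fin c) (Fin d) ℝ) :
    0 ≤ (M * Mᵀ).trace := by
  rw [trace]
  refine sum_nonneg fun i _ => ?_
  rw [diag_apply, Matrix.mul_apply]
  exact sum_nonneg fun j _ => by rw [transpose_apply]; exact mul_self_nonneg _

/-- An odd trace moment lies below the mean of the two neighbouring even ones. -/
theorem trace_pow_odd_le {c : ℕ} {A : Matrix (Fin c) (Fin c) ℝ} (hA : Aᵀ = A) (k : ℕ) :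
    (A ^ (2 * k + 1)).trace ≤ ((A ^ (2 * k)).trace + (A ^ (2 * (k + 1))).trace) / 2 := by
  have h := trace_mul_transpose_nonneg (A ^ k - A ^ (k + 1))
  rw [transpose_sub, transpose_pow, transpose_pow, hA] at h
  have h2 : (A ^ k - A ^ (k + 1)) * (A ^ k - A ^ (k + 1)) =
      A ^ (2 * k) - A ^ (2 * k + 1) - A ^ (2 * k + 1) + A ^ (2 * (k + 1)) := by
    rw [mul_sub, sub_mul, sub_mul, ← pow_add, ← pow_add, ← pow_add, ← pow_add,
      show k + k = 2 * k by ring, show k + 1 + k = 2 * k + 1 by ring,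
      show k + (k + 1) = 2 * k + 1 by ring, show k + 1 + (k + 1) = 2 * (k + 1) by ring]
    abel
  rw [h2, trace_add, trace_sub, trace_sub] at h
  linarith

open scoped Matrix.Norms.L2Operator in
theorem norm_pow_le_trace {c : ℕ} {A : Matrix (Fin c) (Fin c) ℝ} (hA : Aᵀ = A) (q : ℕ)
    (hq : q ≠ 0) : ‖A‖ ^ (2 * q) ≤ (A ^ (2 * q)).trace := by
  obtain ⟨U, d, hU, hU', hUA⟩ := exists_spectral hA
  have hUm : U ∈ unitary (Matrix (Fin c) (Fin c) ℝ) := by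
    rw [Unitary.mem_iff, star_eq_conjTranspose, conjTranspose_eq_transpose_of_trivial]
    exact ⟨hU, hU'⟩
  have hUm' : Uᵀ ∈ unitary (Matrix (Fin c) (Fin c) ℝ) := by
    rw [Unitary.mem_iff, star_eq_conjTranspose, conjTranspose_eq_transpose_of_trivial,
      transpose_transpose]
    exact ⟨hU', hU⟩
  have hn : ‖A‖ = ‖d‖ := by
    have h1 := hUA 1
    simp only [pow_one] at h1
    rw [h1, CStarRing.norm_mul_mem_unitary _ hUm', CStarRing.norm_mem_unitary_mul _ hUm,
      l2_opNorm_diagonal]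
  have ht : (A ^ (2 * q)).trace = ∑ a, d a ^ (2 * q) := by
    rw [hUA, trace_mul_comm, ← Matrix.mul_assoc, hU, Matrix.one_mul, trace_diagonal]
  rw [hn, ht]
  have hnn : ∀ a, 0 ≤ d a ^ (2 * q) := fun a => by rw [pow_mul]; positivity
  rcases isEmpty_or_nonempty (Fin c) with he | he
  · have : ‖d‖ = 0 := by rw [Subsingleton.elim d 0, norm_zero]
    rw [this, zero_pow (by omega)]
    exact sum_nonneg fun a _ => hnn a
  · obtain ⟨a, ha⟩ : ∃ a, ‖d‖ = ‖d a‖ := by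
      obtain ⟨a, -, ha⟩ := Finset.exists_mem_eq_sup' (univ_nonempty (α := Fin c)) (fun a => ‖d a‖)
      refine ⟨a, le_antisymm ?_ (norm_le_pi_norm d a)⟩
      refine (pi_norm_le_iff_of_nonempty _).mpr fun b => ?_
      rw [← ha]
      exact Finset.le_sup' (fun a => ‖d a‖) (mem_univ b)
    rw [ha, Real.norm_eq_abs, (show Even (2 * q) from even_two_mul q).pow_abs]
    exact single_le_sum (f := fun a => d a ^ (2 * q)) (fun a _ => hnn a) (mem_univ a)

end

/-! ### Trace moments of the sampled Gram matrix -/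

section
open scoped BigOperators

/-- The Gram matrix `(1/m) ∑ₛ x_{ω s} x_{ω s}ᵀ` of the rows of `x` drawn by `ω`. -/
noncomputable def rowGram {n c m : ℕ} (x : Fin n → Fin c → ℝ) (ω : Fin m → Fin n) :
    Matrix (Fin c) (Fin c) ℝ :=
  (m : ℝ)⁻¹ • ∑ s, vecMulVec (x (ω s)) (x (ω s))

/-- The deviation of the sampled Gram matrix from the identity, which is its mean when
`∑ᵢ xᵢ xᵢᵀ = n I`. -/
noncomputable def rowDev {n c m : ℕ} (x : Fin n → Fin c → ℝ) (ω : Fin m → Fin n) :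
    Matrix (Fin c) (Fin c) ℝ := rowGram x ω - 1

/-- Exchangeable pair: swapping the drawn index `ω s` with an independent uniform index `i`
preserves the uniform law of `(ω, i)`. -/
theorem expect_exchange {n m : ℕ} (s : Fin m) (F : (Fin m → Fin n) → Fin n → ℝ) :
    𝔼 ω, 𝔼 i, F ω i = 𝔼 ω, 𝔼 i, F (Function.update ω s i) (ω s) := by
  have h := fun F : (Fin m → Fin n) → Fin n → ℝ =>
    Finset.expect_product' (univ : Finset (Fin m → Fin n)) (univ : Finset (Fin n)) F
  rw [← h, ← h, univ_product_univ]
  have hinv : Function.Involutive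
      (fun z : (Fin m → Fin n) × Fin n => (Function.update z.1 s z.2, z.1 s)) := by
    intro z; simp
  exact Fintype.expect_equiv hinv.toPerm _ _ (fun z => by
    simp [Function.Involutive.toPerm])

theorem transpose_vecMulVec_self {c : ℕ} (x : Fin c → ℝ) :
    (vecMulVec x x)ᵀ = vecMulVec x x := by
  ext i j; simp [vecMulVec_apply, mul_comm]

theorem transpose_rowGram {n c m : ℕ} (x : Fin n → Fin c → ℝ) (ω : Fin m → Fin n) :
    (rowGram x ω)ᵀ = rowGram x ω := by
  simp [rowGram, transpose_smul, transpose_sum]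

theorem transpose_rowDev {n c m : ℕ} (x : Fin n → Fin c → ℝ) (ω : Fin m → Fin n) :
    (rowDev x ω)ᵀ = rowDev x ω := by
  simp [rowDev, transpose_sub, transpose_rowGram]

theorem rowDev_sub_update {n c m : ℕ} (x : Fin n → Fin c → ℝ) (ω : Fin m → Fin n)
    (s : Fin m) (i : Fin n) :
    rowDev x ω - rowDev x (Function.update ω s i) =
      (m : ℝ)⁻¹ • (vecMulVec (x (ω s)) (x (ω s)) - vecMulVec (x i) (x i)) := by
  rw [rowDev, rowDev, sub_sub_sub_cancel_right, rowGram, rowGram, ← smul_sub]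
  congr 1
  rw [← sum_sub_distrib, ← Finset.add_sum_erase _ _ (mem_univ s), Finset.sum_eq_zero]
  · simp
  · intro t ht
    rw [Function.update_of_ne (ne_of_mem_erase ht), sub_self]

/-- The trace against the square of a difference of two short rank-one matrices is linear in them,
up to the bound on the squared lengths. -/
theorem trace_rankOne_le {c : ℕ} {T : Matrix (Fin c) (Fin c) ℝ} (hT : Tᵀ = T)
    {B : ℝ} (a b : Fin c → ℝ) (ha : a ⬝ᵥ a ≤ B) (hb : b ⬝ᵥ b ≤ B) :
    ((vecMulVec a a - vecMulVec b b) * (T * T) * (vecMulVec a a - vecMulVec b b)).trace ≤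
      2 * B * ((vecMulVec a a * (T * T)).trace + (vecMulVec b b * (T * T)).trace) := by
  have key : ∀ y : Fin c → ℝ, y ⬝ᵥ y ≤ B →
      (vecMulVec y y * (T * T) * vecMulVec y y).trace ≤ B * (vecMulVec y y * (T * T)).trace := by
    intro y hy
    have h1 : (vecMulVec y y * (T * T)).trace = (T *ᵥ y) ⬝ᵥ (T *ᵥ y) := by
      rw [vecMulVec_mul, trace_vecMulVec, ← vecMul_vecMul]
      have h0 : y ᵥ* T = T *ᵥ y := by rw [← vecMul_transpose, hT]
      rw [h0, dotProduct_comm, dotProduct_mulVec, ← vecMul_transpose, hT, h0, dotProduct_comm]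
    have h2 : (vecMulVec y y * (T * T) * vecMulVec y y).trace =
        (y ⬝ᵥ y) * (vecMulVec y y * (T * T)).trace := by
      rw [trace_mul_comm, ← Matrix.mul_assoc, vecMulVec_mul_vecMulVec, vecMulVec_smul, smul_mul,
        trace_smul, smul_eq_mul]
    rw [h2]
    refine mul_le_mul_of_nonneg_right hy ?_
    rw [h1]
    exact sum_nonneg fun i _ => mul_self_nonneg _
  have h := trace_mul_transpose_nonneg ((vecMulVec a a + vecMulVec b b) * T)
  rw [transpose_mul, transpose_add, transpose_vecMulVec_self, transpose_vecMulVec_self, hT] at h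
  have ka := key a ha
  have kb := key b hb
  generalize vecMulVec a a = X at *
  generalize vecMulVec b b = Y at *
  have e1 : (X + Y) * T * (T * (X + Y)) + (X - Y) * (T * T) * (X - Y) =
      X * (T * T) * X + X * (T * T) * X + (Y * (T * T) * Y + Y * (T * T) * Y) := by
    noncomm_ring
  have e2 := congrArg trace e1
  simp only [trace_add] at e2
  linarith

/-- Recursion for the even trace moments of the Gram deviation. Resampling one row writes
`tr Δ^(2q+2)` as a sum over `s` of traces of `(Δ - Δ₁) Δ^(2q+1)`; symmetrising over the exchangeable
pair and applying `trace_mvt` leaves two powers of the increment, which after summing over `s` contribute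
a factor `B / m`. -/
theorem moment_recursion {n c m : ℕ} (hn : 0 < n) (hm : 0 < m) (x : Fin n → Fin c → ℝ)
    (hI : ∑ i, vecMulVec (x i) (x i) = (n : ℝ) • 1) {B : ℝ} (hB : ∀ i, x i ⬝ᵥ x i ≤ B) (q : ℕ) :
    𝔼 ω : Fin m → Fin n, (rowDev x ω ^ (2 * (q + 1))).trace ≤
      (2 * q + 1) * (2 * (B / m)) * (2 * 𝔼 ω : Fin m → Fin n, (rowDev x ω ^ (2 * q)).trace +
        𝔼 ω : Fin m → Fin n, (rowDev x ω ^ (2 * q + 1)).trace) := by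
  have : Nonempty (Fin n) := ⟨⟨0, hn⟩⟩
  have hm' : (m : ℝ) ≠ 0 := by positivity
  have hEI : ∀ A : Matrix (Fin c) (Fin c) ℝ,
      𝔼 i, (vecMulVec (x i) (x i) * A).trace = A.trace := by
    intro A
    rw [Fintype.expect_eq_sum_div_card, ← trace_sum, ← Finset.sum_mul, hI, smul_mul,
      Matrix.one_mul, trace_smul, Fintype.card_fin, smul_eq_mul, mul_div_assoc,
      mul_div_cancel₀ _ (by positivity)]
  set N := 2 * q with hN
  -- the resampling identity
  have hres : ∀ ω : Fin m → Fin n, (rowDev x ω ^ (N + 2)).trace =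
      ∑ s, 𝔼 i, ((rowDev x ω - rowDev x (Function.update ω s i)) *
        rowDev x ω ^ (N + 1)).trace := by
    intro ω
    have e1 : ∀ s, 𝔼 i, ((rowDev x ω - rowDev x (Function.update ω s i)) *
        rowDev x ω ^ (N + 1)).trace = (m : ℝ)⁻¹ *
          ((vecMulVec (x (ω s)) (x (ω s)) * rowDev x ω ^ (N + 1)).trace
            - (rowDev x ω ^ (N + 1)).trace) := by
      intro s
      simp only [rowDev_sub_update, smul_mul, trace_smul, sub_mul, trace_sub, smul_eq_mul]
      rw [← mul_expect, expect_sub_distrib, hEI, expect_const univ_nonempty]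
    rw [sum_congr rfl fun s _ => e1 s, ← Finset.mul_sum, sum_sub_distrib, ← trace_sum,
      ← Finset.sum_mul]
    have e2 : ∑ s, vecMulVec (x (ω s)) (x (ω s)) = (m : ℝ) • (rowDev x ω + 1) := by
      rw [rowDev, sub_add_cancel, rowGram, smul_smul, mul_inv_cancel₀ hm', one_smul]
    rw [e2, smul_mul, trace_smul, add_mul, Matrix.one_mul, trace_add, ← pow_succ']
    simp
    field_simp
    ring
  have hsym := fun ω : Fin m → Fin n => transpose_rowDev x ω
  have hstep : ∀ s : Fin m, 𝔼 ω : Fin m → Fin n, 𝔼 i,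
      ((rowDev x ω - rowDev x (Function.update ω s i)) * rowDev x ω ^ (N + 1)).trace ≤
      (N + 1) * 𝔼 ω : Fin m → Fin n, 𝔼 i, ((rowDev x ω - rowDev x (Function.update ω s i)) *
        rowDev x ω ^ N * (rowDev x ω - rowDev x (Function.update ω s i))).trace := by
    intro s
    -- symmetrise over the exchangeable pair `(ω, update ω s i)`, then apply `trace_mvt`
    have x1 := expect_exchange s (fun ω i =>
      ((rowDev x ω - rowDev x (Function.update ω s i)) * rowDev x ω ^ (N + 1)).trace)
    have x2 := expect_exchange s (fun ω i =>
      ((rowDev x ω - rowDev x (Function.update ω s i)) *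
        rowDev x ω ^ N * (rowDev x ω - rowDev x (Function.update ω s i))).trace)
    simp only [Function.update_idem, Function.update_eq_self] at x1 x2
    have hle : 𝔼 ω : Fin m → Fin n, 𝔼 i, ((rowDev x ω - rowDev x (Function.update ω s i)) *
        (rowDev x ω ^ (N + 1) - rowDev x (Function.update ω s i) ^ (N + 1))).trace ≤
        𝔼 ω : Fin m → Fin n, 𝔼 i, (N + 1) *
          (((rowDev x ω - rowDev x (Function.update ω s i)) *
            rowDev x ω ^ N * (rowDev x ω - rowDev x (Function.update ω s i))).trace +
          ((rowDev x ω - rowDev x (Function.update ω s i)) *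
            rowDev x (Function.update ω s i) ^ N *
              (rowDev x ω - rowDev x (Function.update ω s i))).trace) := by
      refine expect_le_expect fun ω _ => expect_le_expect fun i _ => ?_
      have := trace_mvt (hsym ω) (hsym (Function.update ω s i)) (N := N) (by simp [hN])
      exact_mod_cast this
    have y1 : ∀ ω i, ((rowDev x ω - rowDev x (Function.update ω s i)) *
        (rowDev x ω ^ (N + 1) - rowDev x (Function.update ω s i) ^ (N + 1))).trace =
        ((rowDev x ω - rowDev x (Function.update ω s i)) * rowDev x ω ^ (N + 1)).trace +
        ((rowDev x (Function.update ω s i) - rowDev x ω) *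
          rowDev x (Function.update ω s i) ^ (N + 1)).trace := by
      intro ω i; rw [← trace_add]; congr 1; noncomm_ring
    have y2 : ∀ ω i, ((rowDev x ω - rowDev x (Function.update ω s i)) *
            rowDev x (Function.update ω s i) ^ N *
              (rowDev x ω - rowDev x (Function.update ω s i))).trace =
        ((rowDev x (Function.update ω s i) - rowDev x ω) *
            rowDev x (Function.update ω s i) ^ N *
              (rowDev x (Function.update ω s i) - rowDev x ω)).trace := by
      intro ω i; congr 1; noncomm_ring
    simp only [y1, y2, expect_add_distrib, ← mul_expect] at hle
    rw [← x1, ← x2] at hle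
    linarith
  have hq : ∀ ω : Fin m → Fin n, ∀ s i, ((rowDev x ω - rowDev x (Function.update ω s i)) *
        rowDev x ω ^ N * (rowDev x ω - rowDev x (Function.update ω s i))).trace ≤
      (m : ℝ)⁻¹ * (m : ℝ)⁻¹ * (2 * B * ((vecMulVec (x (ω s)) (x (ω s)) * rowDev x ω ^ N).trace
        + (vecMulVec (x i) (x i) * rowDev x ω ^ N).trace)) := by
    intro ω s i
    have hp : rowDev x ω ^ N = rowDev x ω ^ q * rowDev x ω ^ q := by
      rw [hN, two_mul, pow_add]
    rw [rowDev_sub_update, hp, smul_mul, smul_mul, Matrix.mul_smul, trace_smul, trace_smul,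
      smul_eq_mul, smul_eq_mul, ← mul_assoc (m : ℝ)⁻¹]
    have := trace_rankOne_le (T := rowDev x ω ^ q) (by rw [transpose_pow, hsym ω])
      (x (ω s)) (x i) (hB _) (hB _)
    exact mul_le_mul_of_nonneg_left this (by positivity)
  have hsum : ∀ ω : Fin m → Fin n, ∑ s, 𝔼 i, (m : ℝ)⁻¹ * (m : ℝ)⁻¹ *
      (2 * B * ((vecMulVec (x (ω s)) (x (ω s)) * rowDev x ω ^ N).trace
        + (vecMulVec (x i) (x i) * rowDev x ω ^ N).trace)) =
      2 * (B / m) * (2 * (rowDev x ω ^ N).trace + (rowDev x ω ^ (N + 1)).trace) := by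
    intro ω
    simp only [← mul_expect, expect_add_distrib, hEI, expect_const univ_nonempty]
    rw [← Finset.mul_sum, ← Finset.mul_sum, sum_add_distrib, ← trace_sum, ← Finset.sum_mul]
    have e2 : ∑ s, vecMulVec (x (ω s)) (x (ω s)) = (m : ℝ) • (rowDev x ω + 1) := by
      rw [rowDev, sub_add_cancel, rowGram, smul_smul, mul_inv_cancel₀ hm', one_smul]
    rw [e2, smul_mul, trace_smul, add_mul, Matrix.one_mul, trace_add, ← pow_succ']
    simp
    field_simp
    ring
  calc 𝔼 ω : Fin m → Fin n, (rowDev x ω ^ (2 * (q + 1))).trace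
      = ∑ s : Fin m, 𝔼 ω : Fin m → Fin n, 𝔼 i,
        ((rowDev x ω - rowDev x (Function.update ω s i)) * rowDev x ω ^ (N + 1)).trace := by
        rw [← expect_sum_comm]
        exact expect_congr rfl fun ω _ => hres ω
    _ ≤ ∑ s : Fin m, (N + 1) * 𝔼 ω : Fin m → Fin n, 𝔼 i, (m : ℝ)⁻¹ * (m : ℝ)⁻¹ *
      (2 * B * ((vecMulVec (x (ω s)) (x (ω s)) * rowDev x ω ^ N).trace
        + (vecMulVec (x i) (x i) * rowDev x ω ^ N).trace)) := by
        refine sum_le_sum fun s _ => (hstep s).trans ?_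
        refine mul_le_mul_of_nonneg_left ?_ (by positivity)
        exact expect_le_expect fun ω _ => expect_le_expect fun i _ => hq ω s i
    _ = _ := by
        rw [← Finset.mul_sum, ← expect_sum_comm, expect_congr rfl fun ω _ => hsum ω,
          ← mul_expect, expect_add_distrib, ← mul_expect, hN]
        push_cast
        ring

end

section
open scoped BigOperators
open scoped Matrix.Norms.L2Operator

/-- Even trace moments of the Gram deviation up to order `2 q`, by iterating the recursion. -/
theorem moment_bound {n c m : ℕ} (hn : 0 < n) (hm : 0 < m) (x : Fin n → Fin c → ℝ)
    (hI : ∑ i, vecMulVec (x i) (x i) = (n : ℝ) • 1) {B : ℝ} (hB0 : 0 ≤ B)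
    (hB : ∀ i, x i ⬝ᵥ x i ≤ B) (q : ℕ) (hq : 4 * q * (B / m) ≤ 1) (k : ℕ) (hk : k ≤ q) :
    𝔼 ω : Fin m → Fin n, (rowDev x ω ^ (2 * k)).trace ≤ c * (20 * q * (B / m)) ^ k := by
  have : Nonempty (Fin n) := ⟨⟨0, hn⟩⟩
  induction k with
  | zero => simp
  | succ k ih =>
    have h1 := moment_recursion hn hm x hI hB k
    have h2 : 𝔼 ω : Fin m → Fin n, (rowDev x ω ^ (2 * k + 1)).trace ≤
        (𝔼 ω : Fin m → Fin n, (rowDev x ω ^ (2 * k)).trace +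
          𝔼 ω : Fin m → Fin n, (rowDev x ω ^ (2 * (k + 1))).trace) / 2 := by
      rw [← expect_add_distrib, expect_div]
      exact expect_le_expect fun ω _ => trace_pow_odd_le (transpose_rowDev x ω) k
    have h0 : 0 ≤ 𝔼 ω : Fin m → Fin n, (rowDev x ω ^ (2 * k)).trace := by
      refine expect_nonneg fun ω _ => ?_
      have := trace_mul_transpose_nonneg (rowDev x ω ^ k)
      rwa [transpose_pow, transpose_rowDev, ← pow_add, ← two_mul] at this
    have h0' : 0 ≤ 𝔼 ω : Fin m → Fin n, (rowDev x ω ^ (2 * (k + 1))).trace := by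
      refine expect_nonneg fun ω _ => ?_
      have := trace_mul_transpose_nonneg (rowDev x ω ^ (k + 1))
      rwa [transpose_pow, transpose_rowDev, ← pow_add, ← two_mul] at this
    have ih' := ih (by omega)
    have hκ : 0 ≤ B / m := by positivity
    generalize B / (m : ℝ) = κ at *
    generalize 𝔼 ω : Fin m → Fin n, (rowDev x ω ^ (2 * k)).trace = M0 at *
    generalize 𝔼 ω : Fin m → Fin n, (rowDev x ω ^ (2 * (k + 1))).trace = M1 at *
    generalize 𝔼 ω : Fin m → Fin n, (rowDev x ω ^ (2 * k + 1)).trace = M2 at *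
    have hkq : (k : ℝ) + 1 ≤ q := by exact_mod_cast hk
    have h3 : (2 * k + 1) * κ ≤ 2 * q * κ := by gcongr; linarith
    set t := (2 * (k : ℝ) + 1) * κ with ht
    have ht0 : 0 ≤ t := by positivity
    have h4 : M1 ≤ t * (5 * M0 + M1) := by
      calc M1 ≤ t * (2 * (2 * M0 + M2)) := by rw [ht]; linarith
        _ ≤ _ := by gcongr; linarith
    -- the hypothesis on `q` makes `t ≤ 1 / 2`, so the term `t * M1` is absorbed
    have h5 : M1 ≤ 10 * t * M0 := by nlinarith
    calc M1 ≤ 10 * t * M0 := h5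
      _ ≤ 10 * (2 * q * κ) * (c * (20 * q * κ) ^ k) := by gcongr
      _ = _ := by ring

/-- Tail of the Gram deviation in operator norm, by the moment inequality at order `2 q`. -/
theorem tail_bound {n c m : ℕ} (hn : 0 < n) (hm : 0 < m) (x : Fin n → Fin c → ℝ)
    (hI : ∑ i, vecMulVec (x i) (x i) = (n : ℝ) • 1) {B : ℝ} (hB0 : 0 ≤ B)
    (hB : ∀ i, x i ⬝ᵥ x i ≤ B) (q : ℕ) (hq0 : q ≠ 0) (hq : 4 * q * (B / m) ≤ 1) :
    𝔼 ω : Fin m → Fin n, (if ‖rowDev x ω‖ ≤ 1 / 4 then 0 else 1 : ℝ) ≤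
      c * (320 * q * (B / m)) ^ q := by
  have h1 := moment_bound hn hm x hI hB0 hB q hq q le_rfl
  calc _ ≤ 𝔼 ω : Fin m → Fin n, 16 ^ q * (rowDev x ω ^ (2 * q)).trace := by
        refine expect_le_expect fun ω _ => ?_
        have h2 := norm_pow_le_trace (transpose_rowDev x ω) q hq0
        split_ifs with h
        · exact mul_nonneg (by positivity) ((by positivity : (0 : ℝ) ≤ _).trans h2)
        · push Not at h
          have h3 : (1 / 4 : ℝ) ^ (2 * q) ≤ ‖rowDev x ω‖ ^ (2 * q) := by gcongr
          calc (1 : ℝ) = 16 ^ q * (1 / 4 : ℝ) ^ (2 * q) := by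
                rw [pow_mul, ← mul_pow]; norm_num
            _ ≤ _ := by gcongr; exact h3.trans h2
    _ ≤ 16 ^ q * (c * (20 * q * (B / m)) ^ q) := by
        rw [← mul_expect]; gcongr
    _ = _ := by
        rw [mul_left_comm, ← mul_pow]; congr 2; ring

/-- Mean of the operator norm of the Gram deviation. The moment order `2 q` is taken so large that
`c ≤ exp q`, and then the dimension factor of the trace costs only a constant. -/
theorem expect_norm_bound {n c m : ℕ} (hn : 0 < n) (hm : 0 < m) (x : Fin n → Fin c → ℝ)
    (hI : ∑ i, vecMulVec (x i) (x i) = (n : ℝ) • 1) {B : ℝ} (hB0 : 0 < B)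
    (hB : ∀ i, x i ⬝ᵥ x i ≤ B) (q : ℕ) (hq0 : q ≠ 0) (hq : 4 * q * (B / m) ≤ 1)
    (hc : (c : ℝ) ≤ Real.exp q) :
    𝔼 ω : Fin m → Fin n, ‖rowDev x ω‖ ≤ 2 * √(20 * Real.exp 1 * q * (B / m)) := by
  have : Nonempty (Fin n) := ⟨⟨0, hn⟩⟩
  have h1 := moment_bound hn hm x hI hB0.le hB q hq q le_rfl
  have hq1 : (0 : ℝ) < q := by positivity
  have hκ : 0 < B / m := by positivity
  set a := √(20 * Real.exp 1 * q * (B / m)) with ha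
  have ha0 : 0 < a := by positivity
  have ha2 : a ^ (2 * q) = Real.exp q * (20 * q * (B / m)) ^ q := by
    rw [pow_mul, ha, Real.sq_sqrt (by positivity), ← Real.exp_one_pow, ← mul_pow]
    congr 1; ring
  calc _ ≤ 𝔼 ω : Fin m → Fin n, (a + a * (a ^ (2 * q))⁻¹ * (rowDev x ω ^ (2 * q)).trace) := by
        refine expect_le_expect fun ω _ => ?_
        have h2 := norm_pow_le_trace (transpose_rowDev x ω) q hq0
        have h3 : ‖rowDev x ω‖ ≤ a + a * (a ^ (2 * q))⁻¹ * ‖rowDev x ω‖ ^ (2 * q) := by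
          rcases le_total ‖rowDev x ω‖ a with h | h
          · have : 0 ≤ a * (a ^ (2 * q))⁻¹ * ‖rowDev x ω‖ ^ (2 * q) := by positivity
            linarith
          · -- here `(‖Δ‖ / a) ^ (2 q) ≥ ‖Δ‖ / a`
            have h4 : 1 ≤ ‖rowDev x ω‖ / a := (one_le_div ha0).mpr h
            have h5 := le_self_pow₀ h4 (show 2 * q ≠ 0 by omega)
            have h6 : ‖rowDev x ω‖ = a * (‖rowDev x ω‖ / a) := by field_simp
            calc ‖rowDev x ω‖ = a * (‖rowDev x ω‖ / a) := h6
              _ ≤ a * (‖rowDev x ω‖ / a) ^ (2 * q) := by gcongr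
              _ = a * (a ^ (2 * q))⁻¹ * ‖rowDev x ω‖ ^ (2 * q) := by rw [div_pow]; ring
              _ ≤ _ := by linarith
        exact h3.trans (by gcongr)
    _ ≤ a + a * (a ^ (2 * q))⁻¹ * (c * (20 * q * (B / m)) ^ q) := by
        rw [expect_add_distrib, ← mul_expect, expect_const univ_nonempty]; gcongr
    _ ≤ a + a * (a ^ (2 * q))⁻¹ * a ^ (2 * q) := by
        rw [ha2]; gcongr
    _ = 2 * a := by field_simp; norm_num

end

/-! ### Rademacher sums -/

section
open scoped BigOperators

theorem expect_bool (f : Bool → ℝ) : 𝔼 b, f b = (f true + f false) / 2 := by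
  rw [Fintype.expect_eq_sum_div_card]; simp

theorem expect_cons {n : ℕ} (F : (Fin (n + 1) → Bool) → ℝ) :
    𝔼 ξ, F ξ = 𝔼 ξ : Fin n → Bool, (F (Fin.cons true ξ) + F (Fin.cons false ξ)) / 2 := by
  rw [← Fintype.expect_equiv (Fin.consEquiv fun _ => Bool)
    (fun z => F (Fin.cons z.1 z.2)) F (fun z => by rfl), ← univ_product_univ,
    expect_product, expect_comm]
  exact expect_congr rfl fun ξ _ => expect_bool _

theorem sgn_sq (b : Bool) : sgn b ^ 2 = 1 := by cases b <;> simp [sgn]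

theorem rademacher_sq {n : ℕ} (a : Fin n → ℝ) :
    𝔼 ξ : Fin n → Bool, (∑ j, a j * sgn (ξ j)) ^ 2 = ∑ j, a j ^ 2 := by
  induction n with
  | zero => simp
  | succ n ih =>
    rw [expect_cons, Fin.sum_univ_succ, ← ih fun j => a j.succ]
    have : ∀ ξ : Fin n → Bool,
        ((∑ j, a j * sgn ((Fin.cons true ξ : Fin (n + 1) → Bool) j)) ^ 2 +
          (∑ j, a j * sgn ((Fin.cons false ξ : Fin (n + 1) → Bool) j)) ^ 2) / 2 =
        a 0 ^ 2 + (∑ j : Fin n, a j.succ * sgn (ξ j)) ^ 2 := by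
      intro ξ
      simp only [Fin.sum_univ_succ, Fin.cons_zero, Fin.cons_succ]
      simp [sgn]
      ring
    rw [expect_congr rfl fun ξ _ => this ξ, expect_add_distrib, expect_const univ_nonempty]

/-- Variance of a Rademacher quadratic form. -/
theorem rademacher_chaos {n : ℕ} (A : Fin n → Fin n → ℝ) (hA : ∀ i j, A i j = A j i) :
    𝔼 ξ : Fin n → Bool, (∑ i, ∑ j, A i j * sgn (ξ i) * sgn (ξ j) - ∑ i, A i i) ^ 2 ≤
      2 * ∑ i, ∑ j, A i j ^ 2 := by
  induction n with
  | zero => simp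
  | succ n ih =>
    have ih' := ih (fun i j => A i.succ j.succ) fun i j => hA _ _
    have h2 := rademacher_sq (fun j => A 0 j.succ)
    rw [expect_cons]
    have : ∀ ξ : Fin n → Bool,
        ((∑ i, ∑ j, A i j * sgn ((Fin.cons true ξ : Fin (n + 1) → Bool) i) *
            sgn ((Fin.cons true ξ : Fin (n + 1) → Bool) j) - ∑ i, A i i) ^ 2 +
          (∑ i, ∑ j, A i j * sgn ((Fin.cons false ξ : Fin (n + 1) → Bool) i) *
            sgn ((Fin.cons false ξ : Fin (n + 1) → Bool) j) - ∑ i, A i i) ^ 2) / 2 =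
        4 * (∑ j, A 0 j.succ * sgn (ξ j)) ^ 2 +
        (∑ i : Fin n, ∑ j : Fin n, A i.succ j.succ * sgn (ξ i) * sgn (ξ j)
          - ∑ i : Fin n, A i.succ i.succ) ^ 2 := by
      intro ξ
      simp only [Fin.sum_univ_succ, Fin.cons_zero, Fin.cons_succ, sum_add_distrib]
      have e : ∀ i : Fin n, A i.succ 0 = A 0 i.succ := fun i => hA _ _
      simp only [e]
      simp only [sgn, if_true, if_false, mul_one, mul_neg, neg_mul, neg_neg,
        sum_neg_distrib, Bool.false_eq_true]
      ring
    rw [expect_congr rfl fun ξ _ => this ξ, expect_add_distrib, ← mul_expect, h2]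
    simp only [Fin.sum_univ_succ, sum_add_distrib]
    have e : ∀ i : Fin n, A i.succ 0 = A 0 i.succ := fun i => hA _ _
    simp only [e]
    nlinarith [sq_nonneg (A 0 0)]

/-- Fourth moment of a Rademacher sum (Khintchine). -/
theorem rademacher_four {n : ℕ} (w : Fin n → ℝ) :
    𝔼 ξ : Fin n → Bool, (∑ j, w j * sgn (ξ j)) ^ 4 ≤ 3 * (∑ j, w j ^ 2) ^ 2 := by
  have h1 := rademacher_chaos (fun i j => w i * w j) fun i j => mul_comm _ _
  have h2 := rademacher_sq w
  set S := ∑ j, w j ^ 2 with hS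
  have e1 : ∑ i, ∑ j, (w i * w j) ^ 2 = S ^ 2 := by
    rw [sq, hS, sum_mul_sum]; simp only [mul_pow]
  have e2 : ∀ ξ : Fin n → Bool,
      (∑ i, ∑ j, w i * w j * sgn (ξ i) * sgn (ξ j) - ∑ i, w i * w i) ^ 2 =
      (∑ j, w j * sgn (ξ j)) ^ 4 - 2 * S * (∑ j, w j * sgn (ξ j)) ^ 2 + S ^ 2 := by
    intro ξ
    have : ∑ i, ∑ j, w i * w j * sgn (ξ i) * sgn (ξ j) = (∑ j, w j * sgn (ξ j)) ^ 2 := by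
      rw [sq, sum_mul_sum]
      exact sum_congr rfl fun i _ => sum_congr rfl fun j _ => by ring
    rw [this, show ∑ i, w i * w i = S by rw [hS]; simp only [sq]]
    ring
  rw [expect_congr rfl fun ξ _ => e2 ξ, e1, expect_add_distrib, expect_sub_distrib,
    ← mul_expect, h2, expect_const univ_nonempty] at h1
  linarith

/-- Rademacher sums are sub-Gaussian. -/
theorem rademacher_mgf {n : ℕ} (w : Fin n → ℝ) :
    𝔼 ξ : Fin n → Bool, Real.exp (∑ j, w j * sgn (ξ j)) ≤ Real.exp ((∑ j, w j ^ 2) / 2) := by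
  induction n with
  | zero => simp
  | succ n ih =>
    rw [expect_cons]
    have : ∀ ξ : Fin n → Bool,
        (Real.exp (∑ j, w j * sgn ((Fin.cons true ξ : Fin (n + 1) → Bool) j)) +
          Real.exp (∑ j, w j * sgn ((Fin.cons false ξ : Fin (n + 1) → Bool) j))) / 2 =
        Real.cosh (w 0) * Real.exp (∑ j : Fin n, w j.succ * sgn (ξ j)) := by
      intro ξ
      simp only [Fin.sum_univ_succ, Fin.cons_zero, Fin.cons_succ, Real.exp_add, Real.cosh_eq]
      simp [sgn]
      ring
    rw [expect_congr rfl fun ξ _ => this ξ, ← mul_expect, Fin.sum_univ_succ, add_div,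
      Real.exp_add]
    have := ih fun j => w j.succ
    have := Real.cosh_le_exp_half_sq (w 0)
    have := Real.cosh_pos (w 0)
    gcongr

open MeasureTheory ProbabilityTheory in
theorem integral_exp_sq_gaussian :
    ∫ g, Real.exp (g ^ 2 / 4) ∂(gaussianReal 0 1) = √2 := by
  rw [integral_gaussianReal_eq_integral_smul (by norm_num)]
  have : ∀ g : ℝ, gaussianPDFReal 0 1 g • Real.exp (g ^ 2 / 4) =
      (√(2 * Real.pi))⁻¹ * Real.exp (-(1 / 4) * g ^ 2) := by
    intro g
    rw [gaussianPDFReal, smul_eq_mul, mul_assoc, ← Real.exp_add]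
    simp
    left; ring
  simp only [this]
  rw [integral_const_mul, integral_gaussian, ← Real.sqrt_inv, ← Real.sqrt_mul (by positivity)]
  congr 1
  field_simp
  norm_num

open MeasureTheory ProbabilityTheory in
/-- Exponential moment of `‖Wᵀ ξ‖²` for `W` with orthonormal columns, by Gaussian
linearisation of the square. -/
theorem rademacher_exp_sq {n c : ℕ} (W : Matrix (Fin n) (Fin c) ℝ) (hW : Wᵀ * W = 1) :
    𝔼 ξ : Fin n → Bool, Real.exp ((∑ a, (∑ j, W j a * sgn (ξ j)) ^ 2) / 4) ≤ √2 ^ c := by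
  set γ : Measure ℝ := gaussianReal 0 1 with hγ
  have hlin : ∀ t : ℝ, ∫ g, Real.exp (t * g) ∂γ = Real.exp (t ^ 2 / 2) := by
    intro t
    have := mgf_gaussianReal (p := γ) (μ := 0) (v := 1) (X := id) (by simp [hγ]) t
    simpa [mgf] using this
  have hlint : ∀ t : ℝ, Integrable (fun g => Real.exp (t * g)) γ := fun t =>
    Integrable.of_integral_ne_zero (by rw [hlin]; positivity)
  have hsqi : Integrable (fun g => Real.exp (g ^ 2 / 4)) γ :=
    Integrable.of_integral_ne_zero (by rw [hγ, integral_exp_sq_gaussian]; positivity)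
  -- `exp (y ^ 2 / 4) = E exp (y g / √2)` for a standard Gaussian `g`, in each coordinate
  have e1 : ∀ ξ : Fin n → Bool, Real.exp ((∑ a, (∑ j, W j a * sgn (ξ j)) ^ 2) / 4) =
      ∫ g : Fin c → ℝ, ∏ a, Real.exp ((∑ j, W j a * sgn (ξ j)) / √2 * g a)
        ∂(Measure.pi fun _ => γ) := by
    intro ξ
    rw [integral_fintype_prod_eq_prod (fun a (g : ℝ) =>
      Real.exp ((∑ j, W j a * sgn (ξ j)) / √2 * g))]
    simp only [hlin]
    rw [← Real.exp_sum]
    congr 1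
    rw [sum_div]
    refine sum_congr rfl fun a _ => ?_
    rw [div_pow, Real.sq_sqrt (by norm_num)]
    ring
  have hint : ∀ ξ : Fin n → Bool, Integrable (fun g : Fin c → ℝ =>
      ∏ a, Real.exp ((∑ j, W j a * sgn (ξ j)) / √2 * g a)) (Measure.pi fun _ => γ) :=
    fun ξ => Integrable.fintype_prod (f := fun a (g : ℝ) =>
      Real.exp ((∑ j, W j a * sgn (ξ j)) / √2 * g)) fun a => hlint _
  have e2 : 𝔼 ξ : Fin n → Bool, Real.exp ((∑ a, (∑ j, W j a * sgn (ξ j)) ^ 2) / 4) =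
      ∫ g : Fin c → ℝ, 𝔼 ξ : Fin n → Bool,
        ∏ a, Real.exp ((∑ j, W j a * sgn (ξ j)) / √2 * g a) ∂(Measure.pi fun _ => γ) := by
    simp only [e1, Fintype.expect_eq_sum_div_card]
    rw [integral_div, integral_finsetSum _ fun ξ _ => hint ξ]
  rw [e2]
  calc _ ≤ ∫ g : Fin c → ℝ, ∏ a, Real.exp (g a ^ 2 / 4) ∂(Measure.pi fun _ => γ) := by
        refine integral_mono ?_ (Integrable.fintype_prod (f := fun _ (g : ℝ) =>
          Real.exp (g ^ 2 / 4)) fun a => hsqi) fun g => ?_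
        · simp only [Fintype.expect_eq_sum_div_card]
          exact (integrable_finsetSum _ fun ξ _ => hint ξ).div_const _
        · have h := rademacher_mgf (fun j => (W *ᵥ g) j / √2)
          have h1 : ∀ ξ : Fin n → Bool, ∑ j, (W *ᵥ g) j / √2 * sgn (ξ j) =
              ∑ a, (∑ j, W j a * sgn (ξ j)) / √2 * g a := by
            intro ξ
            simp only [mulVec, dotProduct, sum_div, sum_mul]
            rw [sum_comm]
            exact sum_congr rfl fun a _ => sum_congr rfl fun j _ => by ring
          have h2 : (∑ j, ((W *ᵥ g) j / √2) ^ 2) / 2 = ∑ a, g a ^ 2 / 4 := by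
            have : (W *ᵥ g) ⬝ᵥ (W *ᵥ g) = g ⬝ᵥ g := by
              rw [dotProduct_mulVec, vecMul_mulVec, hW, vecMul_one]
            simp only [dotProduct, ← sq] at this
            simp only [div_pow, Real.sq_sqrt (show (0 : ℝ) ≤ 2 by norm_num), ← sum_div, this]
            ring
          simp only [h1, h2, Real.exp_sum] at h
          exact h
    _ = √2 ^ c := by
        rw [integral_fintype_prod_eq_prod (fun _ (g : ℝ) => Real.exp (g ^ 2 / 4))]
        simp [hγ, integral_exp_sq_gaussian]

end

/-! ### Leave-one-out expansion of sketched least squares -/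

section
open scoped BigOperators
open scoped Matrix.Norms.L2Operator

theorem mulVec_sq_le {a b : ℕ} (A : Matrix (Fin a) (Fin b) ℝ) (v : Fin b → ℝ) :
    (A *ᵥ v) ⬝ᵥ (A *ᵥ v) ≤ ‖A‖ ^ 2 * (v ⬝ᵥ v) := by
  have h := A.l2_opNorm_mulVec (WithLp.toLp 2 v)
  have h2 := mul_self_le_mul_self (norm_nonneg _) h
  rw [mul_mul_mul_comm, ← sq, ← sq, ← sq, EuclideanSpace.real_norm_sq_eq, EuclideanSpace.real_norm_sq_eq] at h2
  simpa [dotProduct, sq] using h2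

theorem abs_dotProduct_le {a : ℕ} (u v : Fin a → ℝ) :
    |u ⬝ᵥ v| ≤ √(u ⬝ᵥ u) * √(v ⬝ᵥ v) := by
  have h := sum_mul_sq_le_sq_mul_sq univ u v
  rw [← Real.sqrt_mul (by exact sum_nonneg fun i _ => mul_self_nonneg _)]
  refine Real.abs_le_sqrt ?_
  simpa [dotProduct, sq] using h

theorem abs_bilin_le {a b : ℕ} (A : Matrix (Fin a) (Fin b) ℝ) (u : Fin a → ℝ) (v : Fin b → ℝ) :
    |u ⬝ᵥ (A *ᵥ v)| ≤ ‖A‖ * (√(u ⬝ᵥ u) * √(v ⬝ᵥ v)) := by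
  refine (abs_dotProduct_le _ _).trans ?_
  have := Real.sqrt_le_sqrt (mulVec_sq_le A v)
  rw [Real.sqrt_mul (sq_nonneg _), Real.sqrt_sq (norm_nonneg _)] at this
  rw [mul_left_comm]
  gcongr

theorem norm_one_matrix_le {c : ℕ} : ‖(1 : Matrix (Fin c) (Fin c) ℝ)‖ ≤ 1 := by
  rw [← diagonal_one, l2_opNorm_diagonal]
  exact (pi_norm_le_iff_of_nonneg zero_le_one).2 fun i => by simp

/-- Neumann-type bounds for the inverse of a matrix within `1 / 2` of the identity. -/
theorem inv_near_one {c : ℕ} {M : Matrix (Fin c) (Fin c) ℝ} (h : ‖M - 1‖ ≤ 1 / 2) :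
    IsUnit M.det ∧ ‖M⁻¹‖ ≤ 2 ∧ ‖M⁻¹ - 1‖ ≤ 2 * ‖M - 1‖ := by
  have hu : IsUnit M.det := by
    rw [isUnit_iff_ne_zero]
    intro h0
    obtain ⟨v, hv, hMv⟩ := exists_mulVec_eq_zero_iff.2 h0
    have h1 := mulVec_sq_le (M - 1) v
    rw [sub_mulVec, hMv, one_mulVec, zero_sub, neg_dotProduct_neg] at h1
    have h2 : 0 < v ⬝ᵥ v := lt_of_le_of_ne (sum_nonneg fun i _ => mul_self_nonneg _)
      fun h => hv (dotProduct_self_eq_zero.1 h.symm)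
    have h3 : ‖M - 1‖ ^ 2 ≤ (1 / 2) ^ 2 := by gcongr
    nlinarith
  have e : M⁻¹ - 1 = -((M - 1) * M⁻¹) := by
    rw [sub_mul, mul_nonsing_inv _ hu, Matrix.one_mul]; abel
  have h4 : ‖M⁻¹ - 1‖ ≤ ‖M - 1‖ * ‖M⁻¹‖ := by
    rw [e, norm_neg]; exact l2_opNorm_mul _ _
  have h5 : ‖M⁻¹‖ ≤ 1 + ‖M⁻¹ - 1‖ := by
    calc ‖M⁻¹‖ = ‖1 + (M⁻¹ - 1)‖ := by rw [add_sub_cancel]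
      _ ≤ _ := (norm_add_le _ _).trans (by gcongr; exact norm_one_matrix_le)
  have h6 : ‖M - 1‖ * ‖M⁻¹‖ ≤ 1 / 2 * ‖M⁻¹‖ := by gcongr
  have h7 : ‖M⁻¹‖ ≤ 2 := by linarith
  refine ⟨hu, h7, h4.trans ?_⟩
  rw [mul_comm]; gcongr

/-- Cauchy–Schwarz, using that the family `x` is isotropic. -/
theorem expect_abs_mul_le {n c : ℕ} (hn : 0 < n) (x : Fin n → Fin c → ℝ)
    (hI : ∑ i, vecMulVec (x i) (x i) = (n : ℝ) • 1) (b : Fin n → ℝ) (hb : 𝔼 i, b i ^ 2 ≤ 1)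
    (w : Fin c → ℝ) : 𝔼 i, |w ⬝ᵥ x i| * |b i| ≤ √(w ⬝ᵥ w) := by
  have hn' : (0 : ℝ) < n := by positivity
  have h1 : ∑ i, (w ⬝ᵥ x i) ^ 2 = n * (w ⬝ᵥ w) := by
    have : ∀ i, (w ⬝ᵥ x i) ^ 2 = w ⬝ᵥ (vecMulVec (x i) (x i) *ᵥ w) := by
      intro i
      rw [vecMulVec_mulVec, sq, dotProduct_comm w (x i)]; simp [dotProduct_comm w (x i)]
    simp_rw [this]
    rw [← dotProduct_sum, ← sum_mulVec, hI, smul_mulVec, one_mulVec, dotProduct_smul, smul_eq_mul]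
  rw [Fintype.expect_eq_sum_div_card, Fintype.card_fin, div_le_iff₀ hn'] at hb ⊢
  have h2 := sum_mul_sq_le_sq_mul_sq univ (fun i => |w ⬝ᵥ x i|) (fun i => |b i|)
  simp only [sq_abs] at h2
  rw [h1] at h2
  have hw : 0 ≤ w ⬝ᵥ w := sum_nonneg fun i _ => mul_self_nonneg _
  refine le_of_sq_le_sq ?_ (by positivity)
  rw [mul_pow, Real.sq_sqrt hw]
  calc _ ≤ _ := h2
    _ ≤ n * (w ⬝ᵥ w) * (1 * n) := by gcongr
    _ = _ := by ring

/-- One resampled row for a fixed Gram matrix `M` of the other rows. The quotient is what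
Sherman–Morrison produces. Replacing `1 + xᵢᵀ M⁻¹ xᵢ / m` by the constant `1 + c / m` gives mean zero,
since `∑ bᵢ xᵢ = 0`; the replacement costs `‖M - 1‖` and the fluctuation of `‖xᵢ‖²` around `c`. -/
theorem loo_step {n c m : ℕ} (hn : 0 < n) (hm : 0 < m) (x : Fin n → Fin c → ℝ)
    (hI : ∑ i, vecMulVec (x i) (x i) = (n : ℝ) • 1) {B : ℝ}
    (hB : ∀ i, x i ⬝ᵥ x i ≤ B) (hcB : c ≤ B)
    (b : Fin n → ℝ) (hb : 𝔼 i, b i ^ 2 ≤ 1) (hbx : ∑ i, b i • x i = 0)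
    (u : Fin c → ℝ) (hu : u ⬝ᵥ u ≤ 1) {M : Matrix (Fin c) (Fin c) ℝ} (hMT : Mᵀ = M)
    (hM : ‖M - 1‖ ≤ 1 / 2) :
    |𝔼 i, (u ⬝ᵥ (M⁻¹ *ᵥ x i)) * b i / (1 + (x i ⬝ᵥ (M⁻¹ *ᵥ x i)) / m)| ≤
      (6 * B * ‖M - 1‖ + 𝔼 i, |u ⬝ᵥ x i| * |b i| * |x i ⬝ᵥ x i - c|) / m := by
  have : Nonempty (Fin n) := ⟨⟨0, hn⟩⟩
  obtain ⟨-, hN2, hN1⟩ := inv_near_one hM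
  have hNT : (M⁻¹)ᵀ = M⁻¹ := by rw [transpose_nonsing_inv, hMT]
  set N := M⁻¹ with hN
  set Γ := ‖M - 1‖
  have hm' : (0 : ℝ) < m := by positivity
  have hΓ : 0 ≤ Γ := norm_nonneg _
  have hc0 : (0 : ℝ) ≤ c := by positivity
  have hB0 : 0 ≤ B := hc0.trans hcB
  have hx0 : ∀ i, 0 ≤ x i ⬝ᵥ x i := fun i => sum_nonneg fun _ _ => mul_self_nonneg _
  have hu0 : 0 ≤ u ⬝ᵥ u := sum_nonneg fun _ _ => mul_self_nonneg _
  have hsplit : ∀ w v, w ⬝ᵥ (N *ᵥ v) = w ⬝ᵥ v + w ⬝ᵥ ((N - 1) *ᵥ v) := by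
    intro w v; rw [sub_mulVec, one_mulVec, dotProduct_sub]; ring
  have hmove : ∀ (A : Matrix (Fin c) (Fin c) ℝ), Aᵀ = A → ∀ v w,
      w ⬝ᵥ (A *ᵥ v) = (A *ᵥ w) ⬝ᵥ v := by
    intro A hA v w
    rw [dotProduct_mulVec, ← mulVec_transpose, hA]
  have hN1T : (N - 1)ᵀ = N - 1 := by rw [transpose_sub, hNT, transpose_one]
  set τ : Fin n → ℝ := fun i => (x i ⬝ᵥ (N *ᵥ x i)) / m with hτ
  have hquad : ∀ i, |x i ⬝ᵥ ((N - 1) *ᵥ x i)| ≤ 2 * Γ * (x i ⬝ᵥ x i) := by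
    intro i
    refine (abs_bilin_le _ _ _).trans ?_
    rw [Real.mul_self_sqrt (hx0 i)]
    exact mul_le_mul_of_nonneg_right hN1 (hx0 i)
  have hτ0 : ∀ i, 0 ≤ τ i := by
    intro i
    refine div_nonneg ?_ hm'.le
    rw [hsplit]
    have h1 := neg_le_of_abs_le (hquad i)
    have h2 : 2 * Γ * (x i ⬝ᵥ x i) ≤ 1 * (x i ⬝ᵥ x i) := by
      gcongr; exact hx0 i; linarith
    linarith
  have hτc : ∀ i, |c / m - τ i| ≤ (2 * Γ * B + |x i ⬝ᵥ x i - c|) / m := by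
    intro i
    have e : c / m - τ i = -((x i ⬝ᵥ ((N - 1) *ᵥ x i)) + (x i ⬝ᵥ x i - c)) / m := by
      simp only [hτ, hsplit]; ring
    rw [e, abs_div, abs_neg, abs_of_pos hm']
    gcongr
    refine (abs_add_le _ _).trans ?_
    gcongr
    exact (hquad i).trans (by gcongr; exact hB i)
  have hxc : ∀ i, |x i ⬝ᵥ x i - c| ≤ B := by
    intro i
    rw [abs_le]
    constructor <;> linarith [hx0 i, hB i]
  -- with the constant denominator `1 + c / m` the mean vanishes, as the target is orthogonal
  have hmain0 : 𝔼 i, (u ⬝ᵥ (N *ᵥ x i)) * b i = 0 := by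
    have : ∑ i, (u ⬝ᵥ (N *ᵥ x i)) * b i = u ⬝ᵥ (N *ᵥ ∑ i, b i • x i) := by
      rw [mulVec_sum, dotProduct_sum]
      refine sum_congr rfl fun i _ => ?_
      rw [mulVec_smul, dotProduct_smul, smul_eq_mul, mul_comm]
    rw [Fintype.expect_eq_sum_div_card, this, hbx, mulVec_zero, dotProduct_zero, zero_div]
  have hdec : ∀ i, (u ⬝ᵥ (N *ᵥ x i)) * b i / (1 + τ i) =
      (1 + c / m : ℝ)⁻¹ * ((u ⬝ᵥ (N *ᵥ x i)) * b i) +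
      (u ⬝ᵥ (N *ᵥ x i)) * b i * (c / m - τ i) / ((1 + τ i) * (1 + c / m)) := by
    intro i
    have h1 : 0 < 1 + τ i := by linarith [hτ0 i]
    have h2 : (0 : ℝ) < 1 + c / m := by positivity
    field_simp
    ring
  have e1 : 𝔼 i, |u ⬝ᵥ (N *ᵥ x i)| * |b i| ≤ 2 := by
    have h1 := expect_abs_mul_le hn x hI b hb (N *ᵥ u)
    have h2 : √((N *ᵥ u) ⬝ᵥ (N *ᵥ u)) ≤ 2 := by
      refine Real.sqrt_le_iff.2 ⟨by positivity, ?_⟩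
      refine (mulVec_sq_le N u).trans ?_
      calc ‖N‖ ^ 2 * (u ⬝ᵥ u) ≤ 2 ^ 2 * 1 := by gcongr
        _ = _ := by ring
    have h3 := h1.trans h2
    simp only [← hmove N hNT] at h3
    exact h3
  have e2 : 𝔼 i, |u ⬝ᵥ ((N - 1) *ᵥ x i)| * |b i| ≤ 2 * Γ := by
    have h1 := expect_abs_mul_le hn x hI b hb ((N - 1) *ᵥ u)
    have h2 : √(((N - 1) *ᵥ u) ⬝ᵥ ((N - 1) *ᵥ u)) ≤ 2 * Γ := by
      refine Real.sqrt_le_iff.2 ⟨by positivity, ?_⟩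
      refine (mulVec_sq_le (N - 1) u).trans ?_
      calc ‖N - 1‖ ^ 2 * (u ⬝ᵥ u) ≤ (2 * Γ) ^ 2 * 1 := by gcongr
        _ = _ := by ring
    have h3 := h1.trans h2
    simp only [← hmove (N - 1) hN1T] at h3
    exact h3
  change |𝔼 i, (u ⬝ᵥ (N *ᵥ x i)) * b i / (1 + τ i)| ≤ _
  simp_rw [hdec, expect_add_distrib, ← mul_expect, hmain0, mul_zero, zero_add]
  calc _ ≤ 𝔼 i, |(u ⬝ᵥ (N *ᵥ x i)) * b i * (c / m - τ i) / ((1 + τ i) * (1 + c / m))| :=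
        abs_expect_le _ _
    _ ≤ 𝔼 i, (2 * Γ * B * (|u ⬝ᵥ (N *ᵥ x i)| * |b i|) +
          B * (|u ⬝ᵥ ((N - 1) *ᵥ x i)| * |b i|) +
          |u ⬝ᵥ x i| * |b i| * |x i ⬝ᵥ x i - c|) / m := by
        refine expect_le_expect fun i _ => ?_
        have h1 : 1 ≤ 1 + τ i := by linarith [hτ0 i]
        have h2 : (1 : ℝ) ≤ 1 + c / m := by
          have : (0 : ℝ) ≤ c / m := by positivity
          linarith
        have h3 : 1 ≤ (1 + τ i) * (1 + c / m) := by nlinarith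
        rw [abs_div, abs_of_pos (by linarith : 0 < (1 + τ i) * (1 + c / m)), abs_mul, abs_mul]
        refine (div_le_self (by positivity) h3).trans ?_
        calc _ ≤ |u ⬝ᵥ (N *ᵥ x i)| * |b i| * ((2 * Γ * B + |x i ⬝ᵥ x i - c|) / m) := by
              gcongr; exact hτc i
          _ = (2 * Γ * B * (|u ⬝ᵥ (N *ᵥ x i)| * |b i|) +
              |u ⬝ᵥ (N *ᵥ x i)| * |b i| * |x i ⬝ᵥ x i - c|) / m := by ring
          _ ≤ (2 * Γ * B * (|u ⬝ᵥ (N *ᵥ x i)| * |b i|) +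
              (|u ⬝ᵥ x i| + |u ⬝ᵥ ((N - 1) *ᵥ x i)|) * |b i| * |x i ⬝ᵥ x i - c|) / m := by
              gcongr; rw [hsplit]; exact abs_add_le _ _
          _ = (2 * Γ * B * (|u ⬝ᵥ (N *ᵥ x i)| * |b i|) +
              |u ⬝ᵥ ((N - 1) *ᵥ x i)| * |b i| * |x i ⬝ᵥ x i - c| +
              |u ⬝ᵥ x i| * |b i| * |x i ⬝ᵥ x i - c|) / m := by ring
          _ ≤ (2 * Γ * B * (|u ⬝ᵥ (N *ᵥ x i)| * |b i|) +
              |u ⬝ᵥ ((N - 1) *ᵥ x i)| * |b i| * B +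
              |u ⬝ᵥ x i| * |b i| * |x i ⬝ᵥ x i - c|) / m := by
              gcongr; exact hxc i
          _ = _ := by ring
    _ = (2 * Γ * B * (𝔼 i, |u ⬝ᵥ (N *ᵥ x i)| * |b i|) +
          B * (𝔼 i, |u ⬝ᵥ ((N - 1) *ᵥ x i)| * |b i|) +
          𝔼 i, |u ⬝ᵥ x i| * |b i| * |x i ⬝ᵥ x i - c|) / m := by
        rw [← expect_div, expect_add_distrib, expect_add_distrib, ← mul_expect, ← mul_expect]
    _ ≤ (2 * Γ * B * 2 + B * (2 * Γ) + 𝔼 i, |u ⬝ᵥ x i| * |b i| * |x i ⬝ᵥ x i - c|) / m := by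
        gcongr
    _ = _ := by ring

theorem norm_vecMulVec_self_le {c : ℕ} (x : Fin c → ℝ) : ‖vecMulVec x x‖ ≤ x ⬝ᵥ x := by
  have h := norm_pow_le_trace (transpose_vecMulVec_self x) 1 one_ne_zero
  have hx : 0 ≤ x ⬝ᵥ x := sum_nonneg fun _ _ => mul_self_nonneg _
  refine le_of_sq_le_sq ?_ hx
  calc _ ≤ _ := h
    _ = _ := by
      rw [mul_one, sq, vecMulVec_mul_vecMulVec, vecMulVec_smul, trace_smul, trace_vecMulVec,
        smul_eq_mul, sq]

/-- The Sherman–Morrison formula applied to the updating vector `x` itself. -/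
theorem inv_rankOne_mulVec {c : ℕ} {M : Matrix (Fin c) (Fin c) ℝ} (hM : IsUnit M.det)
    (a : ℝ) (x : Fin c → ℝ) (h : IsUnit (M + a • vecMulVec x x).det)
    (h0 : 1 + a * (x ⬝ᵥ (M⁻¹ *ᵥ x)) ≠ 0) :
    (M + a • vecMulVec x x)⁻¹ *ᵥ x = (1 + a * (x ⬝ᵥ (M⁻¹ *ᵥ x)))⁻¹ • (M⁻¹ *ᵥ x) := by
  have h1 : (M + a • vecMulVec x x) *ᵥ (M⁻¹ *ᵥ x) = (1 + a * (x ⬝ᵥ (M⁻¹ *ᵥ x))) • x := by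
    rw [add_mulVec, mulVec_mulVec, mul_nonsing_inv _ hM, one_mulVec, smul_mulVec,
      vecMulVec_mulVec, add_smul, one_smul, mul_smul]
    simp
  have h2 : (M + a • vecMulVec x x)⁻¹ *ᵥ ((M + a • vecMulVec x x) *ᵥ (M⁻¹ *ᵥ x)) = _ :=
    congrArg (fun v => (M + a • vecMulVec x x)⁻¹ *ᵥ v) h1
  rw [mulVec_mulVec, nonsing_inv_mul _ h, one_mulVec, mulVec_smul] at h2
  rw [eq_inv_smul_iff₀ h0, ← h2]

/-- Bias of the sketched least-squares coefficients for a target `b` orthogonal to the columns of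
`x`, truncated to the event `‖rowDev‖ ≤ 1 / 4`. Each sampled row is resampled given the others
(`loo_step`). The truncation event depends on the resampled row too, which is what the last term,
proportional to the probability of the complement, pays for. -/
theorem loo_bias {n c m : ℕ} (hn : 0 < n) (hm : 0 < m) (x : Fin n → Fin c → ℝ)
    (hI : ∑ i, vecMulVec (x i) (x i) = (n : ℝ) • 1) {B : ℝ}
    (hB : ∀ i, x i ⬝ᵥ x i ≤ B) (hcB : c ≤ B) (hBm : B / m ≤ 1 / 4)
    (b : Fin n → ℝ) (hb : 𝔼 i, b i ^ 2 ≤ 1) (hbx : ∑ i, b i • x i = 0)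
    {β : ℝ} (hβ : ∀ i, |b i| ≤ β)
    (u : Fin c → ℝ) (hu : u ⬝ᵥ u ≤ 1) :
    |𝔼 ω : Fin m → Fin n, if ‖rowDev x ω‖ ≤ 1 / 4 then
        u ⬝ᵥ ((rowGram x ω)⁻¹ *ᵥ ((m : ℝ)⁻¹ • ∑ s, b (ω s) • x (ω s))) else 0| ≤
      (6 * B * (𝔼 ω : Fin m → Fin n, ‖rowDev x ω‖ + B / m) +
        𝔼 i, |u ⬝ᵥ x i| * |b i| * |x i ⬝ᵥ x i - c|) / m +
      2 * √B * β * 𝔼 ω : Fin m → Fin n, (if ‖rowDev x ω‖ ≤ 1 / 4 then 0 else 1 : ℝ) := by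
  have : Nonempty (Fin n) := ⟨⟨0, hn⟩⟩
  have hm' : (0 : ℝ) < m := by positivity
  have hB0 : 0 ≤ B := le_trans (by positivity) hcB
  have hβ0 : 0 ≤ β := (abs_nonneg _).trans (hβ ⟨0, hn⟩)
  set Q := 𝔼 i, |u ⬝ᵥ x i| * |b i| * |x i ⬝ᵥ x i - c| with hQ
  have hQ0 : 0 ≤ Q := expect_nonneg fun i _ => by positivity
  set bad : (Fin m → Fin n) → ℝ := fun ω => if ‖rowDev x ω‖ ≤ 1 / 4 then 0 else 1 with hbad
  have hbad0 : ∀ ω, 0 ≤ bad ω := by intro ω; simp only [hbad]; split_ifs <;> norm_num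
  set f : Fin m → (Fin m → Fin n) → ℝ := fun s ω => if ‖rowDev x ω‖ ≤ 1 / 4 then
    (u ⬝ᵥ ((rowGram x ω)⁻¹ *ᵥ x (ω s))) * b (ω s) else 0 with hf
  have hsum : ∀ ω : Fin m → Fin n, (if ‖rowDev x ω‖ ≤ 1 / 4 then
        u ⬝ᵥ ((rowGram x ω)⁻¹ *ᵥ ((m : ℝ)⁻¹ • ∑ s, b (ω s) • x (ω s))) else 0) =
        (m : ℝ)⁻¹ * ∑ s, f s ω := by
    intro ω
    by_cases h : ‖rowDev x ω‖ ≤ 1 / 4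
    · simp only [hf, if_pos h]
      rw [mulVec_smul, dotProduct_smul, mulVec_sum, dotProduct_sum, smul_eq_mul]
      congr 1
      refine sum_congr rfl fun s _ => ?_
      rw [mulVec_smul, dotProduct_smul, smul_eq_mul, mul_comm]
    · simp only [hf, if_neg h, sum_const_zero, mul_zero]
  have hnx : ∀ i, ‖(m : ℝ)⁻¹ • vecMulVec (x i) (x i)‖ ≤ B / m := by
    intro i
    rw [norm_smul, Real.norm_of_nonneg (by positivity), inv_mul_eq_div]
    gcongr
    exact (norm_vecMulVec_self_le _).trans (hB i)
  -- one sampled row at a time, resampled conditionally on the other ones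
  have hs : ∀ s ω, |𝔼 i, f s (Function.update ω s i)| ≤
      (6 * B * (‖rowDev x ω‖ + B / m) + Q) / m +
        2 * √B * β * 𝔼 i, bad (Function.update ω s i) := by
    intro s ω
    set M := rowGram x ω - (m : ℝ)⁻¹ • vecMulVec (x (ω s)) (x (ω s)) with hM
    have hMT : Mᵀ = M := by
      rw [hM, transpose_sub, transpose_rowGram, transpose_smul, transpose_vecMulVec_self]
    have hup : ∀ i, rowGram x (Function.update ω s i) =
        M + (m : ℝ)⁻¹ • vecMulVec (x i) (x i) := by
      intro i
      have h := rowDev_sub_update x ω s i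
      rw [rowDev, rowDev, sub_sub_sub_cancel_right, smul_sub] at h
      rw [hM, ← sub_eq_iff_eq_add, ← sub_eq_zero] at *
      rw [← neg_eq_zero, ← h]; abel
    have hΓ : ‖M - 1‖ ≤ ‖rowDev x ω‖ + B / m := by
      have : M - 1 = rowDev x ω - (m : ℝ)⁻¹ • vecMulVec (x (ω s)) (x (ω s)) := by
        rw [hM, rowDev]; abel
      rw [this]
      exact (norm_sub_le _ _).trans (by gcongr; exact hnx _)
    have hΓu : ∀ i, ‖rowDev x (Function.update ω s i)‖ ≤ 1 / 4 → ‖M - 1‖ ≤ 1 / 2 := by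
      intro i hi
      have : M - 1 = rowDev x (Function.update ω s i) - (m : ℝ)⁻¹ • vecMulVec (x i) (x i) := by
        rw [rowDev, hup]; abel
      rw [this]
      refine (norm_sub_le _ _).trans ?_
      linarith [hnx i]
    have hb0 : 0 ≤ 2 * √B * β * 𝔼 i, bad (Function.update ω s i) :=
      mul_nonneg (by positivity) (expect_nonneg fun i _ => hbad0 _)
    by_cases hM2 : ‖M - 1‖ ≤ 1 / 2
    · obtain ⟨hMu, hN2, hN1⟩ := inv_near_one hM2
      have hx0 : ∀ i, 0 ≤ x i ⬝ᵥ x i := fun i => sum_nonneg fun _ _ => mul_self_nonneg _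
      have hτ0 : ∀ i, 0 ≤ x i ⬝ᵥ (M⁻¹ *ᵥ x i) := by
        intro i
        have h1 := abs_bilin_le (M⁻¹ - 1) (x i) (x i)
        rw [Real.mul_self_sqrt (hx0 i), sub_mulVec, one_mulVec, dotProduct_sub] at h1
        have h2 : ‖M⁻¹ - 1‖ * (x i ⬝ᵥ x i) ≤ 1 * (x i ⬝ᵥ x i) := by
          gcongr
          · exact hx0 i
          · linarith
        linarith [neg_le_of_abs_le h1]
      have hfi : ∀ i, |f s (Function.update ω s i) -
          (u ⬝ᵥ (M⁻¹ *ᵥ x i)) * b i / (1 + (x i ⬝ᵥ (M⁻¹ *ᵥ x i)) / m)| ≤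
          2 * √B * β * bad (Function.update ω s i) := by
        intro i
        have hpos : 1 ≤ 1 + (x i ⬝ᵥ (M⁻¹ *ᵥ x i)) / m := by
          have := div_nonneg (hτ0 i) hm'.le
          linarith
        by_cases h : ‖rowDev x (Function.update ω s i)‖ ≤ 1 / 4
        · simp only [hf, hbad, if_pos h, Function.update_self, mul_zero]
          have hu := (inv_near_one (M := rowGram x (Function.update ω s i))
            (h.trans (by norm_num))).1
          rw [hup] at hu ⊢
          rw [inv_rankOne_mulVec hMu _ _ hu
            (by rw [inv_mul_eq_div]; positivity), dotProduct_smul, smul_eq_mul]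
          rw [inv_mul_eq_div (m : ℝ), abs_nonpos_iff]
          ring
        · simp only [hf, hbad, if_neg h, mul_one, zero_sub, abs_neg]
          rw [abs_div, abs_of_pos (by linarith : 0 < 1 + (x i ⬝ᵥ (M⁻¹ *ᵥ x i)) / m), abs_mul]
          refine (div_le_self (by positivity) hpos).trans ?_
          gcongr
          · refine (abs_bilin_le _ _ _).trans ?_
            gcongr
            rw [← one_mul √B]
            gcongr
            · exact Real.sqrt_le_one.2 hu
            · exact hB i
          · exact hβ i
      have hloo := loo_step hn hm x hI hB hcB b hb hbx u hu hMT hM2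
      have e : 𝔼 i, f s (Function.update ω s i) =
          𝔼 i, (u ⬝ᵥ (M⁻¹ *ᵥ x i)) * b i / (1 + (x i ⬝ᵥ (M⁻¹ *ᵥ x i)) / m) +
          𝔼 i, (f s (Function.update ω s i) -
            (u ⬝ᵥ (M⁻¹ *ᵥ x i)) * b i / (1 + (x i ⬝ᵥ (M⁻¹ *ᵥ x i)) / m)) := by
        rw [expect_sub_distrib]; ring
      rw [e]
      refine (abs_add_le _ _).trans (add_le_add ?_ ?_)
      · refine hloo.trans ?_
        gcongr
      · rw [mul_expect]
        exact (abs_expect_le _ _).trans (expect_le_expect fun i _ => hfi i)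
    -- if the Gram matrix without row `s` is far from the identity, so is every completion of it
    · have : ∀ i, f s (Function.update ω s i) = 0 := by
        intro i
        simp only [hf]
        exact if_neg fun h => hM2 (hΓu i h)
      simp only [this, expect_const_zero, abs_zero]
      positivity
  have hex : ∀ s (g : (Fin m → Fin n) → ℝ),
      𝔼 ω, g ω = 𝔼 ω, 𝔼 i, g (Function.update ω s i) := by
    intro s g
    have := expect_exchange s (fun ω (_ : Fin n) => g ω)
    simpa [expect_const univ_nonempty] using this
  have hs' : ∀ s, |𝔼 ω, f s ω| ≤ (6 * B * (𝔼 ω : Fin m → Fin n, ‖rowDev x ω‖ + B / m) + Q) / m +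
        2 * √B * β * 𝔼 ω, bad ω := by
    intro s
    rw [hex s (f s), hex s bad]
    refine (abs_expect_le _ _).trans ((expect_le_expect fun ω _ => hs s ω).trans_eq ?_)
    rw [expect_add_distrib, ← expect_div, ← mul_expect, expect_add_distrib, ← mul_expect,
      expect_add_distrib, expect_const univ_nonempty, expect_const univ_nonempty]
  simp_rw [hsum]
  rw [← mul_expect, expect_sum_comm, abs_mul, abs_of_pos (by positivity : (0 : ℝ) < (m : ℝ)⁻¹),
    inv_mul_le_iff₀ hm']
  refine (abs_sum_le_sum_abs _ _).trans ((sum_le_sum fun s _ => hs' s).trans_eq ?_)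
  rw [sum_const, card_univ, Fintype.card_fin, nsmul_eq_mul]

end

/-! ### Rows of a randomised Hadamard transform -/

section
open scoped BigOperators

theorem dsgn_transpose_mul {n : ℕ} (ξ : Fin n → Bool) : (Dsgn ξ)ᵀ * Dsgn ξ = 1 := by
  rw [Dsgn, diagonal_transpose, diagonal_mul_diagonal]
  simp [← sq, sgn_sq]

theorem signed_transpose_mul {n : ℕ} {H : Matrix (Fin n) (Fin n) ℝ}
    (hH : Hᵀ * H = (n : ℝ) • (1 : Matrix (Fin n) (Fin n) ℝ)) (ξ : Fin n → Bool) :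
    (H * Dsgn ξ)ᵀ * (H * Dsgn ξ) = (n : ℝ) • (1 : Matrix (Fin n) (Fin n) ℝ) := by
  rw [transpose_mul, Matrix.mul_assoc, ← Matrix.mul_assoc Hᵀ, hH, smul_mul, Matrix.one_mul,
    Matrix.mul_smul, dsgn_transpose_mul]

theorem signed_mulVec {n : ℕ} (H : Matrix (Fin n) (Fin n) ℝ) (ξ : Fin n → Bool)
    (w : Fin n → ℝ) (i : Fin n) :
    ((H * Dsgn ξ) *ᵥ w) i = ∑ j, (H i j * w j) * sgn (ξ j) := by
  simp only [mulVec, dotProduct, Dsgn, mul_diagonal]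
  exact sum_congr rfl fun j _ => by ring

theorem dot_signed_row {n c : ℕ} (H : Matrix (Fin n) (Fin n) ℝ) (V : Matrix (Fin n) (Fin c) ℝ)
    (ξ : Fin n → Bool) (u : Fin c → ℝ) (i : Fin n) :
    u ⬝ᵥ (H * Dsgn ξ * V) i = ∑ j, (H i j * (V *ᵥ u) j) * sgn (ξ j) := by
  rw [← signed_mulVec, mulVec_mulVec, dotProduct_comm]; rfl

theorem sum_vecMulVec_row {n c : ℕ} (A : Matrix (Fin n) (Fin c) ℝ) :
    ∑ i, vecMulVec (A i) (A i) = Aᵀ * A := by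
  ext a b; simp [Matrix.sum_apply, vecMulVec_apply, Matrix.mul_apply]

theorem signed_gram {n c : ℕ} {H : Matrix (Fin n) (Fin n) ℝ} {V : Matrix (Fin n) (Fin c) ℝ}
    (hV : Vᵀ * V = 1) (hH : Hᵀ * H = (n : ℝ) • (1 : Matrix (Fin n) (Fin n) ℝ))
    (ξ : Fin n → Bool) :
    ∑ i, vecMulVec ((H * Dsgn ξ * V) i) ((H * Dsgn ξ * V) i) = (n : ℝ) • 1 := by
  rw [sum_vecMulVec_row, transpose_mul, Matrix.mul_assoc, ← Matrix.mul_assoc _ _ V,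
    signed_transpose_mul hH, smul_mul, Matrix.one_mul, Matrix.mul_smul, hV]

theorem signed_orthogonal {n c : ℕ} {H : Matrix (Fin n) (Fin n) ℝ}
    {V : Matrix (Fin n) (Fin c) ℝ}
    (hH : Hᵀ * H = (n : ℝ) • (1 : Matrix (Fin n) (Fin n) ℝ)) (ξ : Fin n → Bool)
    {v : Fin n → ℝ} (hv : Vᵀ *ᵥ v = 0) :
    ∑ i, ((H * Dsgn ξ) *ᵥ v) i • (H * Dsgn ξ * V) i = 0 := by
  have h : (H * Dsgn ξ * V)ᵀ *ᵥ ((H * Dsgn ξ) *ᵥ v) = 0 := by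
    rw [transpose_mul, mulVec_mulVec, Matrix.mul_assoc, signed_transpose_mul hH, Matrix.mul_smul,
      Matrix.mul_one, smul_mulVec, hv, smul_zero]
  rw [← h]
  ext a
  simp only [Finset.sum_apply, Pi.smul_apply, smul_eq_mul, mulVec, dotProduct, transpose_apply]
  exact sum_congr rfl fun i _ => mul_comm _ _

theorem signed_sum_sq {n : ℕ} {H : Matrix (Fin n) (Fin n) ℝ}
    (hH : Hᵀ * H = (n : ℝ) • (1 : Matrix (Fin n) (Fin n) ℝ)) (ξ : Fin n → Bool)
    (v : Fin n → ℝ) : ∑ i, ((H * Dsgn ξ) *ᵥ v) i ^ 2 = n * (v ⬝ᵥ v) := by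
  have h : ((H * Dsgn ξ) *ᵥ v) ⬝ᵥ ((H * Dsgn ξ) *ᵥ v) = n * (v ⬝ᵥ v) := by
    rw [dotProduct_mulVec, ← mulVec_transpose, mulVec_mulVec, signed_transpose_mul hH,
      smul_mulVec, one_mulVec, smul_dotProduct, smul_eq_mul]
  rw [← h]; simp [dotProduct, sq]

theorem orthonormal_frob {n c : ℕ} {V : Matrix (Fin n) (Fin c) ℝ} (hV : Vᵀ * V = 1) :
    ∑ j, (V * Vᵀ) j j = c ∧ ∑ j, ∑ k, (V * Vᵀ) j k ^ 2 = c := by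
  have h1 : (V * Vᵀ).trace = c := by rw [trace_mul_comm, hV]; simp
  refine ⟨h1, ?_⟩
  have h2 : (V * Vᵀ * (V * Vᵀ)ᵀ).trace = c := by
    rw [transpose_mul, transpose_transpose, Matrix.mul_assoc, ← Matrix.mul_assoc Vᵀ, hV,
      Matrix.one_mul, h1]
  rw [← h2]
  refine sum_congr rfl fun j _ => ?_
  rw [diag_apply, Matrix.mul_apply (M := V * Vᵀ)]
  exact sum_congr rfl fun k _ => sq _

theorem orthonormal_mulVec {n c : ℕ} {V : Matrix (Fin n) (Fin c) ℝ} (hV : Vᵀ * V = 1)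
    (u : Fin c → ℝ) : (V *ᵥ u) ⬝ᵥ (V *ᵥ u) = u ⬝ᵥ u := by
  rw [dotProduct_mulVec, ← mulVec_transpose, mulVec_mulVec, hV, one_mulVec]

/-- Squared row lengths of `H D(ξ) V` are Rademacher quadratic forms built from the projection
`V Vᵀ`. -/
theorem row_sq_chaos {n c : ℕ} (H : Matrix (Fin n) (Fin n) ℝ) (V : Matrix (Fin n) (Fin c) ℝ)
    (ξ : Fin n → Bool) (i : Fin n) :
    (H * Dsgn ξ * V) i ⬝ᵥ (H * Dsgn ξ * V) i =
      ∑ j, ∑ k, (H i j * H i k * (V * Vᵀ) j k) * sgn (ξ j) * sgn (ξ k) := by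
  have h : (H * Dsgn ξ * V) i ⬝ᵥ (H * Dsgn ξ * V) i =
      ((H * Dsgn ξ * V) * (H * Dsgn ξ * V)ᵀ) i i := by
    rfl
  have h2 : (H * Dsgn ξ * V) * (H * Dsgn ξ * V)ᵀ =
      (H * Dsgn ξ) * (V * Vᵀ) * (H * Dsgn ξ)ᵀ := by
    rw [transpose_mul _ V]; simp only [Matrix.mul_assoc]
  rw [h, h2, Matrix.mul_apply, sum_comm]
  refine sum_congr rfl fun j _ => ?_
  rw [Matrix.mul_apply, sum_mul]
  refine sum_congr rfl fun k _ => ?_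
  simp only [transpose_apply, Dsgn, mul_diagonal]
  ring

/-- For a fixed row index, the mixed moment of a linear form in the row of `H D(ξ) V`, the target
entry `(H D(ξ) v)_i` and the fluctuation of the squared row length around `c`. The two linear forms
have fourth moment at most `3` and the fluctuation has variance at most `2 c`, which gives the
order `√c` rather than the trivial `c`. -/
theorem expect_triple_le {n c : ℕ} {H : Matrix (Fin n) (Fin n) ℝ} {V : Matrix (Fin n) (Fin c) ℝ}
    (hH1 : ∀ i j, H i j = 1 ∨ H i j = -1) (hV : Vᵀ * V = 1) (hc : 0 < c)
    (u : Fin c → ℝ) (hu : u ⬝ᵥ u ≤ 1) (v : Fin n → ℝ) (hv : v ⬝ᵥ v ≤ 1) (i : Fin n) :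
    𝔼 ξ : Fin n → Bool, |u ⬝ᵥ (H * Dsgn ξ * V) i| * |((H * Dsgn ξ) *ᵥ v) i| *
      |(H * Dsgn ξ * V) i ⬝ᵥ (H * Dsgn ξ * V) i - c| ≤ 5 / 2 * √c := by
  have hH2 : ∀ i j, H i j ^ 2 = 1 := fun i j => by rcases hH1 i j with h | h <;> simp [h]
  have hsq : ∀ w : Fin n → ℝ, ∑ j, (H i j * w j) ^ 2 = w ⬝ᵥ w := by
    intro w
    refine sum_congr rfl fun j _ => ?_
    rw [mul_pow, hH2, one_mul, sq]
  have hp : 𝔼 ξ : Fin n → Bool, (u ⬝ᵥ (H * Dsgn ξ * V) i) ^ 4 ≤ 3 := by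
    simp_rw [dot_signed_row]
    refine (rademacher_four _).trans ?_
    rw [hsq, orthonormal_mulVec hV]
    have : 0 ≤ u ⬝ᵥ u := sum_nonneg fun _ _ => mul_self_nonneg _
    nlinarith
  have hq : 𝔼 ξ : Fin n → Bool, (((H * Dsgn ξ) *ᵥ v) i) ^ 4 ≤ 3 := by
    simp_rw [signed_mulVec]
    refine (rademacher_four _).trans ?_
    rw [hsq]
    have : 0 ≤ v ⬝ᵥ v := sum_nonneg fun _ _ => mul_self_nonneg _
    nlinarith
  obtain ⟨f1, f2⟩ := orthonormal_frob hV
  have hr : 𝔼 ξ : Fin n → Bool, ((H * Dsgn ξ * V) i ⬝ᵥ (H * Dsgn ξ * V) i - c) ^ 2 ≤ 2 * c := by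
    have h := rademacher_chaos (fun j k => H i j * H i k * (V * Vᵀ) j k) (by
      intro j k
      have : (V * Vᵀ) j k = (V * Vᵀ) k j := by
        conv_lhs => rw [← transpose_apply (V * Vᵀ), transpose_mul, transpose_transpose]
      rw [this]; ring)
    have e1 : ∑ j, H i j * H i j * (V * Vᵀ) j j = c := by
      simp_rw [← sq, hH2, one_mul]; exact f1
    have e2 : ∑ j, ∑ k, (H i j * H i k * (V * Vᵀ) j k) ^ 2 = c := by
      simp_rw [mul_pow, hH2, one_mul]; exact f2
    rw [e1, e2] at h
    simp_rw [row_sq_chaos]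
    exact h
  have hc' : (0 : ℝ) < c := by positivity
  have hs : 0 < √(c : ℝ) := by positivity
  calc _ ≤ 𝔼 ξ : Fin n → Bool, (√c / 4 * (u ⬝ᵥ (H * Dsgn ξ * V) i) ^ 4 +
        √c / 4 * (((H * Dsgn ξ) *ᵥ v) i) ^ 4 +
        (2 * √c)⁻¹ * ((H * Dsgn ξ * V) i ⬝ᵥ (H * Dsgn ξ * V) i - c) ^ 2) := by
        refine expect_le_expect fun ξ _ => ?_
        generalize u ⬝ᵥ (H * Dsgn ξ * V) i = P
        generalize ((H * Dsgn ξ) *ᵥ v) i = Q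
        generalize (H * Dsgn ξ * V) i ⬝ᵥ (H * Dsgn ξ * V) i - c = R
        have e1 : P ^ 4 = (|P| ^ 2) ^ 2 := by rw [sq_abs]; ring
        have e2 : Q ^ 4 = (|Q| ^ 2) ^ 2 := by rw [sq_abs]; ring
        rw [e1, e2, ← sq_abs R]
        have h1 : 0 ≤ (2 * √c)⁻¹ * (|R| - √c * (|P| * |Q|)) ^ 2 := by positivity
        have h2 : 0 ≤ √c / 4 * (|P| ^ 2 - |Q| ^ 2) ^ 2 := by positivity
        have h3 : (2 * √c)⁻¹ * (|R| - √c * (|P| * |Q|)) ^ 2 =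
            (2 * √c)⁻¹ * |R| ^ 2 - |P| * |Q| * |R| + √c / 2 * (|P| * |Q|) ^ 2 := by
          field_simp; ring
        rw [h3] at h1
        nlinarith
    _ ≤ √c / 4 * 3 + √c / 4 * 3 + (2 * √c)⁻¹ * (2 * c) := by
        rw [expect_add_distrib, expect_add_distrib, ← mul_expect, ← mul_expect, ← mul_expect]
        gcongr
    _ = _ := by
        have : (2 * √c)⁻¹ * (2 * c) = √(c : ℝ) := by
          rw [inv_mul_eq_iff_eq_mul₀ (by positivity), mul_assoc, Real.mul_self_sqrt hc'.le]
        rw [this]; ring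

/-- The probability that some row of `H D(ξ) V` has squared length above `10 c`: Chernoff bound
with `rademacher_exp_sq` for each row, then a union bound over the `n` rows. -/
theorem row_tail {n c : ℕ} {H : Matrix (Fin n) (Fin n) ℝ} {V : Matrix (Fin n) (Fin c) ℝ}
    (hH1 : ∀ i j, H i j = 1 ∨ H i j = -1) (hV : Vᵀ * V = 1) :
    𝔼 ξ : Fin n → Bool, (if ∀ i, (H * Dsgn ξ * V) i ⬝ᵥ (H * Dsgn ξ * V) i ≤ 10 * c
      then 0 else 1 : ℝ) ≤ n * Real.exp (-(2 * c)) := by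
  have hH2 : ∀ i j, H i j ^ 2 = 1 := fun i j => by rcases hH1 i j with h | h <;> simp [h]
  have hexp : ∀ i, 𝔼 ξ : Fin n → Bool,
      Real.exp (((H * Dsgn ξ * V) i ⬝ᵥ (H * Dsgn ξ * V) i) / 4) ≤ √2 ^ c := by
    intro i
    have hW := rademacher_exp_sq (Matrix.of fun j a => H i j * V j a) (by
      rw [← hV]; ext a b
      simp only [Matrix.mul_apply, transpose_apply, of_apply]
      refine sum_congr rfl fun j _ => ?_
      linear_combination V j a * V j b * hH2 i j)
    refine le_of_eq_of_le (expect_congr rfl fun ξ _ => ?_) hW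
    congr 2
    refine sum_congr rfl fun a _ => ?_
    rw [sq]
    have : (H * Dsgn ξ * V) i a = ∑ j, of (fun j a => H i j * V j a) j a * sgn (ξ j) := by
      rw [Matrix.mul_apply]
      refine sum_congr rfl fun j _ => ?_
      simp only [Dsgn, mul_diagonal, of_apply]; ring
    rw [this]
  have h2 : √2 ^ c ≤ Real.exp (c / 2) := by
    have h3 : √2 ≤ Real.exp (1 / 2) := by
      rw [Real.sqrt_le_left (Real.exp_pos _).le, ← Real.exp_nat_mul]
      have := Real.add_one_le_exp (1 : ℝ)
      norm_num at this ⊢; linarith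
    calc √2 ^ c ≤ Real.exp (1 / 2) ^ c := by gcongr
      _ = _ := by rw [← Real.exp_nat_mul]; congr 1; ring
  calc _ ≤ 𝔼 ξ : Fin n → Bool, ∑ i, Real.exp (-(5 / 2 * c)) *
        Real.exp (((H * Dsgn ξ * V) i ⬝ᵥ (H * Dsgn ξ * V) i) / 4) := by
        refine expect_le_expect fun ξ _ => ?_
        split_ifs with h
        · positivity
        · push Not at h
          obtain ⟨i, hi⟩ := h
          refine le_trans ?_ (single_le_sum (fun j _ => by positivity) (mem_univ i))
          rw [← Real.exp_add]
          exact Real.one_le_exp (by linarith)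
    _ = ∑ i, Real.exp (-(5 / 2 * c)) * 𝔼 ξ : Fin n → Bool,
        Real.exp (((H * Dsgn ξ * V) i ⬝ᵥ (H * Dsgn ξ * V) i) / 4) := by
        rw [expect_sum_comm]; simp_rw [mul_expect]
    _ ≤ ∑ i : Fin n, Real.exp (-(5 / 2 * c)) * Real.exp (c / 2) := by
        gcongr with i; exact (hexp i).trans h2
    _ = _ := by
        rw [sum_const, card_univ, Fintype.card_fin, nsmul_eq_mul, ← Real.exp_add]
        congr 2; ring

end

/-! ### One-sided bias bound -/

section
open scoped BigOperators
open scoped Matrix.Norms.L2Operator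

/-- The sketched pseudo-inverse `((A V)ᵀ A V)⁻¹ (A V)ᵀ A`, where the rows of `A` are the sampled
rows of `H D(ξ)`; rescaling `A` does not change it. -/
noncomputable def pinvSketch {n c m : ℕ} (H : Matrix (Fin n) (Fin n) ℝ)
    (V : Matrix (Fin n) (Fin c) ℝ) (z : (Fin m → Fin n) × (Fin n → Bool)) :
    Matrix (Fin c) (Fin n) ℝ :=
  (((H * Dsgn z.2).submatrix z.1 id * V)ᵀ * ((H * Dsgn z.2).submatrix z.1 id * V))⁻¹ *
    ((H * Dsgn z.2).submatrix z.1 id * V)ᵀ * (H * Dsgn z.2).submatrix z.1 id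

open Classical in
/-- The event that all rows of `H D(ξ) V` are short and the sampled Gram matrix is close to the
identity. -/
noncomputable def goodEvent {n c : ℕ} (m : ℕ) (H : Matrix (Fin n) (Fin n) ℝ)
    (V : Matrix (Fin n) (Fin c) ℝ) : Finset ((Fin m → Fin n) × (Fin n → Bool)) :=
  univ.filter fun z => (∀ i, (H * Dsgn z.2 * V) i ⬝ᵥ (H * Dsgn z.2 * V) i ≤ 10 * c) ∧
    ‖rowDev (H * Dsgn z.2 * V) z.1‖ ≤ 1 / 4

theorem mem_goodEvent {n c m : ℕ} {H : Matrix (Fin n) (Fin n) ℝ}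
    {V : Matrix (Fin n) (Fin c) ℝ} {z : (Fin m → Fin n) × (Fin n → Bool)} :
    z ∈ goodEvent m H V ↔ (∀ i, (H * Dsgn z.2 * V) i ⬝ᵥ (H * Dsgn z.2 * V) i ≤ 10 * c) ∧
      ‖rowDev (H * Dsgn z.2 * V) z.1‖ ≤ 1 / 4 := by
  simp [goodEvent]

theorem sampled_gram {n c m : ℕ} (hm : 0 < m) (H : Matrix (Fin n) (Fin n) ℝ)
    (V : Matrix (Fin n) (Fin c) ℝ) (z : (Fin m → Fin n) × (Fin n → Bool)) :
    ((H * Dsgn z.2).submatrix z.1 id * V)ᵀ * ((H * Dsgn z.2).submatrix z.1 id * V) =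
      (m : ℝ) • rowGram (H * Dsgn z.2 * V) z.1 := by
  have hm' : (m : ℝ) ≠ 0 := by positivity
  have e : rowGram (H * Dsgn z.2 * V) z.1 = (m : ℝ)⁻¹ •
      ∑ s, vecMulVec ((H * Dsgn z.2 * V) (z.1 s)) ((H * Dsgn z.2 * V) (z.1 s)) := rfl
  rw [e, smul_smul, mul_inv_cancel₀ hm', one_smul]
  ext a b
  rw [Matrix.sum_apply]
  rfl

theorem isUnit_sampled_gram {n c m : ℕ} (hm : 0 < m) {H : Matrix (Fin n) (Fin n) ℝ}
    {V : Matrix (Fin n) (Fin c) ℝ} {z : (Fin m → Fin n) × (Fin n → Bool)}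
    (hz : z ∈ goodEvent m H V) :
    IsUnit (((H * Dsgn z.2).submatrix z.1 id * V)ᵀ *
      ((H * Dsgn z.2).submatrix z.1 id * V)).det := by
  have hm' : (m : ℝ) ≠ 0 := by positivity
  have h := (inv_near_one (M := rowGram (H * Dsgn z.2 * V) z.1)
    ((mem_goodEvent.1 hz).2.trans (by norm_num))).1
  rw [sampled_gram hm, det_smul]
  exact ((isUnit_iff_ne_zero.2 hm').pow _).mul h

theorem pinvSketch_mul {n c m : ℕ} (hm : 0 < m) {H : Matrix (Fin n) (Fin n) ℝ}
    {V : Matrix (Fin n) (Fin c) ℝ} {z : (Fin m → Fin n) × (Fin n → Bool)}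
    (hz : z ∈ goodEvent m H V) : pinvSketch H V z * V = 1 := by
  rw [pinvSketch, Matrix.mul_assoc, Matrix.mul_assoc]
  exact nonsing_inv_mul _ (isUnit_sampled_gram hm hz)

/-- The sketched pseudo-inverse in terms of the sampled rows. No invertibility is needed: for a
singular Gram matrix both sides vanish by the convention `A⁻¹ = 0`. -/
theorem pinvSketch_mulVec {n c m : ℕ} (hm : 0 < m) (H : Matrix (Fin n) (Fin n) ℝ)
    (V : Matrix (Fin n) (Fin c) ℝ) (z : (Fin m → Fin n) × (Fin n → Bool)) (v : Fin n → ℝ) :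
    pinvSketch H V z *ᵥ v = (rowGram (H * Dsgn z.2 * V) z.1)⁻¹ *ᵥ
      ((m : ℝ)⁻¹ • ∑ s, ((H * Dsgn z.2) *ᵥ v) (z.1 s) • (H * Dsgn z.2 * V) (z.1 s)) := by
  have hm' : (m : ℝ) ≠ 0 := by positivity
  have h1 : ((H * Dsgn z.2).submatrix z.1 id * V)ᵀ *ᵥ ((H * Dsgn z.2).submatrix z.1 id *ᵥ v) =
      ∑ s, ((H * Dsgn z.2) *ᵥ v) (z.1 s) • (H * Dsgn z.2 * V) (z.1 s) := by
    ext a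
    rw [Finset.sum_apply]
    change ∑ s, (H * Dsgn z.2 * V) (z.1 s) a * ((H * Dsgn z.2) *ᵥ v) (z.1 s) =
      ∑ s, ((H * Dsgn z.2) *ᵥ v) (z.1 s) * (H * Dsgn z.2 * V) (z.1 s) a
    exact sum_congr rfl fun s _ =>
      mul_comm ((H * Dsgn z.2 * V) (z.1 s) a) (((H * Dsgn z.2) *ᵥ v) (z.1 s))
  rw [pinvSketch, ← mulVec_mulVec, ← mulVec_mulVec, h1, sampled_gram hm, mulVec_smul,
    ← smul_mulVec]
  congr 1
  by_cases h : IsUnit (rowGram (H * Dsgn z.2 * V) z.1).det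
  · refine inv_eq_left_inv ?_
    rw [smul_mul, Matrix.mul_smul, smul_smul, inv_mul_cancel₀ hm', one_smul, nonsing_inv_mul _ h]
  · have h' : ¬ IsUnit ((m : ℝ) • rowGram (H * Dsgn z.2 * V) z.1).det := by
      rw [det_smul]
      intro hh
      exact h (isUnit_of_mul_isUnit_right hh)
    rw [nonsing_inv_apply_not_isUnit _ h, nonsing_inv_apply_not_isUnit _ h', smul_zero]

theorem expect_pair {α β : Type*} [Fintype α] [Fintype β] (F : α × β → ℝ) :
    𝔼 z, F z = 𝔼 b, 𝔼 a, F (a, b) := by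
  rw [expect_comm, ← expect_product, univ_product_univ]

open Classical in
/-- Probability of the good event and bias on it, given a bound `D` on the mean Gram deviation and
a bound `t` on its tail that hold for all isotropic families with short rows. -/
theorem one_sided_raw {n c m : ℕ} (hn : 0 < n) (hm : 0 < m) (hc : 0 < c)
    {H : Matrix (Fin n) (Fin n) ℝ} {V : Matrix (Fin n) (Fin c) ℝ}
    (hH1 : ∀ i j, H i j = 1 ∨ H i j = -1)
    (hH : Hᵀ * H = (n : ℝ) • (1 : Matrix (Fin n) (Fin n) ℝ)) (hV : Vᵀ * V = 1)
    (hBm : 10 * c / (m : ℝ) ≤ 1 / 4) {D t : ℝ}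
    (hD : ∀ x : Fin n → Fin c → ℝ, ∑ i, vecMulVec (x i) (x i) = (n : ℝ) • 1 →
      (∀ i, x i ⬝ᵥ x i ≤ 10 * c) → 𝔼 ω : Fin m → Fin n, ‖rowDev x ω‖ ≤ D)
    (ht : ∀ x : Fin n → Fin c → ℝ, ∑ i, vecMulVec (x i) (x i) = (n : ℝ) • 1 →
      (∀ i, x i ⬝ᵥ x i ≤ 10 * c) →
        𝔼 ω : Fin m → Fin n, (if ‖rowDev x ω‖ ≤ 1 / 4 then 0 else 1 : ℝ) ≤ t)
    (hD0 : 0 ≤ D) (ht0 : 0 ≤ t) :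
    1 - n * Real.exp (-(2 * c)) - t ≤
      𝔼 z : (Fin m → Fin n) × (Fin n → Bool), (if z ∈ goodEvent m H V then 1 else 0 : ℝ) ∧
    ∀ u v, u ⬝ᵥ u ≤ 1 → v ⬝ᵥ v ≤ 1 → Vᵀ *ᵥ v = 0 →
      |𝔼 z : (Fin m → Fin n) × (Fin n → Bool), if z ∈ goodEvent m H V then
        u ⬝ᵥ (pinvSketch H V z *ᵥ v) else 0| ≤
      (60 * c * (D + 10 * c / m) + 5 / 2 * √c) / m + 2 * √(10 * c) * √n * t := by
  have : Nonempty (Fin n) := ⟨⟨0, hn⟩⟩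
  have hn' : (0 : ℝ) < n := by positivity
  have hm' : (0 : ℝ) < m := by positivity
  set good : (Fin n → Bool) → Prop := fun ξ =>
    ∀ i, (H * Dsgn ξ * V) i ⬝ᵥ (H * Dsgn ξ * V) i ≤ 10 * c with hgood
  constructor
  · have h1 : ∀ ξ : Fin n → Bool, 1 - (if good ξ then 0 else 1 : ℝ) - t ≤
        𝔼 ω : Fin m → Fin n, (if (ω, ξ) ∈ goodEvent m H V then 1 else 0 : ℝ) := by
      intro ξ
      by_cases hg : good ξ
      · have h2 := ht _ (signed_gram hV hH ξ) hg
        have h3 : 𝔼 ω : Fin m → Fin n, (if (ω, ξ) ∈ goodEvent m H V then 1 else 0 : ℝ) +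
            𝔼 ω : Fin m → Fin n,
              (if ‖rowDev (H * Dsgn ξ * V) ω‖ ≤ 1 / 4 then 0 else 1 : ℝ) = 1 := by
          rw [← expect_add_distrib]
          refine (expect_congr rfl fun ω _ => ?_).trans (expect_const univ_nonempty (1 : ℝ))
          simp only [mem_goodEvent]
          by_cases h : ‖rowDev (H * Dsgn ξ * V) ω‖ ≤ 1 / 4
          · rw [if_pos ⟨hg, h⟩, if_pos h, add_zero]
          · rw [if_neg fun hh => h hh.2, if_neg h, zero_add]
        rw [if_pos hg]
        linarith
      · rw [if_neg hg]
        have : 0 ≤ 𝔼 ω : Fin m → Fin n, (if (ω, ξ) ∈ goodEvent m H V then 1 else 0 : ℝ) :=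
          expect_nonneg fun ω _ => by split_ifs <;> norm_num
        linarith
    have h2 := expect_le_expect (s := univ) fun ξ _ => h1 ξ
    rw [expect_sub_distrib, expect_sub_distrib, expect_const univ_nonempty,
      expect_const univ_nonempty] at h2
    rw [expect_pair]
    have h3 := row_tail hH1 hV
    have h4 : (𝔼 ξ : Fin n → Bool, if good ξ then 0 else 1 : ℝ) ≤ n * Real.exp (-(2 * c)) := by
      convert h3
    linarith
  · intro u v hu hv hVv
    have hvv : 0 ≤ v ⬝ᵥ v := sum_nonneg fun _ _ => mul_self_nonneg _
    set Q : (Fin n → Bool) → ℝ := fun ξ => 𝔼 i, |u ⬝ᵥ (H * Dsgn ξ * V) i| *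
      |((H * Dsgn ξ) *ᵥ v) i| * |(H * Dsgn ξ * V) i ⬝ᵥ (H * Dsgn ξ * V) i - c| with hQ
    have hQ0 : ∀ ξ, 0 ≤ Q ξ := fun ξ => expect_nonneg fun i _ => by positivity
    have hQE : 𝔼 ξ, Q ξ ≤ 5 / 2 * √c := by
      simp only [hQ]
      rw [expect_comm]
      exact expect_le univ_nonempty fun i _ => expect_triple_le hH1 hV hc u hu v hv i
    have h1 : ∀ ξ : Fin n → Bool, |𝔼 ω : Fin m → Fin n, if (ω, ξ) ∈ goodEvent m H V then
        u ⬝ᵥ (pinvSketch H V (ω, ξ) *ᵥ v) else 0| ≤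
        (60 * c * (D + 10 * c / m) + Q ξ) / m + 2 * √(10 * c) * √n * t := by
      intro ξ
      by_cases hg : good ξ
      · have hsq := signed_sum_sq hH ξ v
        have hb : 𝔼 i, ((H * Dsgn ξ) *ᵥ v) i ^ 2 ≤ 1 := by
          rw [Fintype.expect_eq_sum_div_card, Fintype.card_fin, div_le_one hn', hsq]
          nlinarith
        have hβ : ∀ i, |((H * Dsgn ξ) *ᵥ v) i| ≤ √n := by
          intro i
          refine Real.abs_le_sqrt ?_
          refine (single_le_sum (f := fun i => ((H * Dsgn ξ) *ᵥ v) i ^ 2)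
            (fun j _ => sq_nonneg _) (mem_univ i)).trans ?_
          rw [hsq]; nlinarith
        have hcB : (c : ℝ) ≤ 10 * c := by
          have : (0 : ℝ) ≤ c := by positivity
          linarith
        have h2 := loo_bias hn hm _ (signed_gram hV hH ξ) hg hcB hBm _ hb
          (signed_orthogonal hH ξ hVv) hβ u hu
        have h3 : ∀ ω : Fin m → Fin n, (if (ω, ξ) ∈ goodEvent m H V then
            u ⬝ᵥ (pinvSketch H V (ω, ξ) *ᵥ v) else 0) =
            if ‖rowDev (H * Dsgn ξ * V) ω‖ ≤ 1 / 4 then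
              u ⬝ᵥ ((rowGram (H * Dsgn ξ * V) ω)⁻¹ *ᵥ
                ((m : ℝ)⁻¹ • ∑ s, ((H * Dsgn ξ) *ᵥ v) (ω s) • (H * Dsgn ξ * V) (ω s))) else 0 := by
          intro ω
          rw [pinvSketch_mulVec hm]
          simp only [mem_goodEvent]
          by_cases h : ‖rowDev (H * Dsgn ξ * V) ω‖ ≤ 1 / 4
          · rw [if_pos ⟨hg, h⟩, if_pos h]
          · rw [if_neg fun hh => h hh.2, if_neg h]
        rw [expect_congr rfl fun ω _ => h3 ω]
        refine (le_of_eq_of_le ?_ h2).trans ?_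
        · rfl
        · have h4 := hD _ (signed_gram hV hH ξ) hg
          have h5 := ht _ (signed_gram hV hH ξ) hg
          have h6 : 6 * (10 * (c : ℝ)) = 60 * c := by ring
          rw [h6]
          change (60 * c * (𝔼 ω : Fin m → Fin n, ‖rowDev (H * Dsgn ξ * V) ω‖ + 10 * c / m) +
            Q ξ) / m + _ ≤ _
          gcongr
      · have h3 : ∀ ω : Fin m → Fin n, (if (ω, ξ) ∈ goodEvent m H V then
            u ⬝ᵥ (pinvSketch H V (ω, ξ) *ᵥ v) else 0) = 0 := by
          intro ω
          have hne : (ω, ξ) ∉ goodEvent m H V := by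
            rw [mem_goodEvent]
            exact fun hh => hg hh.1
          exact if_neg hne
        rw [expect_congr rfl fun ω _ => h3 ω, expect_const_zero, abs_zero]
        have := hQ0 ξ
        positivity
    rw [expect_pair]
    refine (abs_expect_le _ _).trans ((expect_le_expect fun ξ _ => h1 ξ).trans ?_)
    rw [expect_add_distrib, ← expect_div, expect_add_distrib, expect_const univ_nonempty,
      expect_const univ_nonempty]
    gcongr

theorem orthonormal_card_le {n c : ℕ} {V : Matrix (Fin n) (Fin c) ℝ} (hV : Vᵀ * V = 1) :
    c ≤ n := by
  have h1 : (1 : Matrix (Fin c) (Fin c) ℝ).rank = c := by rw [rank_one]; simp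
  rw [← h1, ← hV]
  exact (rank_mul_le_right _ _).trans ((rank_le_height V).trans_eq (by simp))

/-- A bound on the bilinear form over unit vectors bounds the operator norm of `M` on the orthogonal
complement of the range of `V`. -/
theorem quad_of_bilin {n c : ℕ} {V : Matrix (Fin n) (Fin c) ℝ} {M : Matrix (Fin c) (Fin n) ℝ}
    {e : ℝ}
    (h : ∀ u v, u ⬝ᵥ u ≤ 1 → v ⬝ᵥ v ≤ 1 → Vᵀ *ᵥ v = 0 → |u ⬝ᵥ (M *ᵥ v)| ≤ e)
    (v : Fin n → ℝ) (hv : Vᵀ *ᵥ v = 0) : (M *ᵥ v) ⬝ᵥ (M *ᵥ v) ≤ e ^ 2 * (v ⬝ᵥ v) := by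
  have nn : ∀ {k : ℕ} (w : Fin k → ℝ), 0 ≤ w ⬝ᵥ w := fun w => sum_nonneg fun _ _ => mul_self_nonneg _
  rcases (nn v).eq_or_lt with h0 | h0
  · have : v = 0 := dotProduct_self_eq_zero.1 h0.symm
    simp [this]
  rcases (nn (M *ᵥ v)).eq_or_lt with h1 | h1
  · rw [← h1]; positivity
  set w := M *ᵥ v with hw
  have ha : 0 < √(w ⬝ᵥ w) := Real.sqrt_pos.2 h1
  have hb : 0 < √(v ⬝ᵥ v) := Real.sqrt_pos.2 h0
  have h2 := h ((√(w ⬝ᵥ w))⁻¹ • w) ((√(v ⬝ᵥ v))⁻¹ • v)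
    (by rw [smul_dotProduct, dotProduct_smul, smul_eq_mul, smul_eq_mul, ← mul_assoc, ← mul_inv,
          Real.mul_self_sqrt h1.le, inv_mul_cancel₀ h1.ne'])
    (by rw [smul_dotProduct, dotProduct_smul, smul_eq_mul, smul_eq_mul, ← mul_assoc, ← mul_inv,
          Real.mul_self_sqrt h0.le, inv_mul_cancel₀ h0.ne'])
    (by rw [mulVec_smul, hv, smul_zero])
  rw [mulVec_smul, ← hw, smul_dotProduct, dotProduct_smul, smul_eq_mul, smul_eq_mul] at h2
  have h3 : (√(w ⬝ᵥ w))⁻¹ * ((√(v ⬝ᵥ v))⁻¹ * (w ⬝ᵥ w)) = √(w ⬝ᵥ w) / √(v ⬝ᵥ v) := by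
    nth_rewrite 2 [← Real.mul_self_sqrt h1.le]
    field_simp
  rw [h3, abs_of_pos (by positivity), div_le_iff₀ hb] at h2
  have h4 : √(w ⬝ᵥ w) ^ 2 ≤ (e * √(v ⬝ᵥ v)) ^ 2 := by gcongr
  rwa [mul_pow, Real.sq_sqrt h1.le, Real.sq_sqrt h0.le] at h4

/-- Consequences of the range of `δ`. -/
theorem range_facts {n c : ℕ} (hn : 3 ≤ n) (hcn : c ≤ n) {δ : ℝ}
    (hδ1 : n * Real.exp (-c) < δ) (hδ2 : δ ≤ (n : ℝ) ^ (-3 : ℝ)) :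
    0 < δ ∧ n * δ ≤ 1 ∧ δ ≤ 1 ∧ 1 < Real.log n ∧ (4 : ℝ) < c ∧ Real.log n ≤ Real.log (c / δ) ∧
      3 < Real.log (c / δ) ∧ Real.log (c / δ) ≤ n ∧ 1 ≤ Real.log (n / δ) := by
  have hn3 : (3 : ℝ) ≤ n := by exact_mod_cast hn
  have hn0 : (0 : ℝ) < n := by linarith
  have hδ0 : 0 < δ := lt_of_le_of_lt (by positivity) hδ1
  have ha : 1 < Real.log n := by
    rw [Real.lt_log_iff_exp_lt hn0]
    have := Real.exp_one_lt_d9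
    linarith
  have hl2 : Real.log δ ≤ -3 * Real.log n := by
    have := Real.log_le_log hδ0 hδ2
    rwa [Real.log_rpow hn0] at this
  have hl1 : Real.log n - c < Real.log δ := by
    have := Real.log_lt_log (by positivity) hδ1
    rwa [Real.log_mul hn0.ne' (Real.exp_pos _).ne', Real.log_exp, ← sub_eq_add_neg] at this
  have hc4 : (4 : ℝ) < c := by linarith
  have hc0 : (0 : ℝ) < c := by linarith
  have hcn' : (c : ℝ) ≤ n := by exact_mod_cast hcn
  have hlc0 : 0 ≤ Real.log c := Real.log_nonneg (by linarith)
  have hlcn : Real.log c ≤ Real.log n := Real.log_le_log hc0 hcn'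
  have hℓ : Real.log (c / δ) = Real.log c - Real.log δ := Real.log_div hc0.ne' hδ0.ne'
  have hL : Real.log (n / δ) = Real.log n - Real.log δ := Real.log_div hn0.ne' hδ0.ne'
  have hnδ : n * δ ≤ 1 := by
    rw [← Real.log_nonpos_iff (by positivity), Real.log_mul hn0.ne' hδ0.ne']
    linarith
  refine ⟨hδ0, hnδ, ?_, ha, hc4, ?_, ?_, ?_, ?_⟩
  · nlinarith
  all_goals linarith

/-- With `a = log n`, this converts `√(log n)` into `log n / log log n`. -/
theorem sqrt_le_div_log {a : ℝ} (ha : 1 < a) : √a ≤ 2 * (a / Real.log a) := by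
  have hl : 0 < Real.log a := Real.log_pos ha
  have h1 : Real.log a = 2 * Real.log √a := by rw [Real.log_sqrt (by linarith)]; ring
  have h2 := Real.log_le_sub_one_of_pos (Real.sqrt_pos.2 (by linarith : 0 < a))
  have h3 := Real.mul_self_sqrt (by linarith : 0 ≤ a)
  have hs : 0 ≤ √a := Real.sqrt_nonneg _
  rw [← mul_div_assoc, le_div_iff₀ hl]
  calc √a * Real.log a ≤ √a * (2 * √a) := mul_le_mul_of_nonneg_left (by linarith) hs
    _ = _ := by rw [mul_left_comm, h3]

/-- The tail of the Gram deviation at moment order `⌈2 ℓ⌉`. -/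
theorem tail_numeric {c m δ ℓ : ℝ} (hc : 0 < c) (hm : 0 < m) (hδ : 0 < δ)
    (hℓ : ℓ = Real.log (c / δ)) (hℓ1 : 3 < ℓ) (hmC : 10 ^ 7 * c * ℓ ≤ m) :
    c * (320 * (⌈2 * ℓ⌉₊ : ℝ) * (10 * c / m)) ^ ⌈2 * ℓ⌉₊ ≤ δ ^ 2 / c ∧
    c * (320 * (⌈2 * ℓ⌉₊ : ℝ) * (10 * c / m)) ^ ⌈2 * ℓ⌉₊ ≤ 28800 * ℓ * δ ^ 2 / m := by
  set q := ⌈2 * ℓ⌉₊ with hq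
  have hq1 : 2 * ℓ ≤ q := Nat.le_ceil _
  have hq2 : (q : ℝ) ≤ 3 * ℓ := by
    have := Nat.ceil_lt_add_one (by linarith : 0 ≤ 2 * ℓ)
    linarith
  set ρ := 320 * (q : ℝ) * (10 * c / m) with hρ
  have hρ0 : 0 ≤ ρ := by positivity
  have hρ1 : ρ ≤ 9600 * c * ℓ / m := by
    calc ρ ≤ 320 * (3 * ℓ) * (10 * c / m) := by rw [hρ]; gcongr
      _ = _ := by ring
  have hρ2 : 3 * ρ ≤ 1 := by
    have : 9600 * c * ℓ / m ≤ 1 / 3 := by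
      rw [div_le_iff₀ hm]; nlinarith [mul_pos hc (by linarith : 0 < ℓ)]
    linarith
  have he3 : Real.exp 1 ≤ 3 := by have := Real.exp_one_lt_d9; linarith
  have hρe : ρ ≤ Real.exp (-1) := by
    rw [Real.exp_neg]
    calc ρ ≤ 3⁻¹ := by linarith
      _ ≤ _ := by gcongr
  have hq0 : 1 ≤ q := by
    have : (0 : ℝ) < q := by linarith
    exact_mod_cast this
  have hexp : Real.exp (-(2 * ℓ)) = (δ / c) ^ 2 := by
    have : -(2 * ℓ) = (2 : ℕ) * Real.log (δ / c) := by
      rw [hℓ, ← inv_div, Real.log_inv]; push_cast; ring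
    rw [this, Real.exp_nat_mul, Real.exp_log (by positivity)]
  have hpow : ρ ^ q ≤ 3 * ρ * (δ / c) ^ 2 := by
    obtain ⟨k, hk⟩ : ∃ k, q = k + 1 := ⟨q - 1, by omega⟩
    calc ρ ^ q = ρ ^ k * ρ := by rw [hk, pow_succ]
      _ ≤ Real.exp (-1) ^ k * ρ := by gcongr
      _ = Real.exp 1 * Real.exp (-q) * ρ := by
          rw [← Real.exp_nat_mul, ← Real.exp_add, hk]; congr 2; push_cast; ring
      _ ≤ 3 * Real.exp (-(2 * ℓ)) * ρ := by gcongr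
      _ = _ := by rw [hexp]; ring
  constructor
  · calc c * ρ ^ q ≤ c * (3 * ρ * (δ / c) ^ 2) := by gcongr
      _ ≤ c * (1 * (δ / c) ^ 2) := by gcongr
      _ = _ := by field_simp
  · calc c * ρ ^ q ≤ c * (3 * ρ * (δ / c) ^ 2) := by gcongr
      _ ≤ c * (3 * (9600 * c * ℓ / m) * (δ / c) ^ 2) := by gcongr
      _ = _ := by field_simp; ring

/-- Numerical form of the bias bound. -/
theorem bias_numeric {n c m δ ℓ a q t : ℝ} (hn : 0 < n) (hc : 4 < c) (hcn : c ≤ n) (hm : 0 < m)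
    (hδ0 : 0 < δ) (hnδ : n * δ ≤ 1) (ha : 1 < a) (haℓ : a ≤ ℓ) (hℓn : ℓ ≤ n)
    (hmC : 10 ^ 7 * c * ℓ ≤ m) (hq : q ≤ 2 * a) (hq0 : 0 ≤ q) (ht0 : 0 ≤ t)
    (ht : t ≤ 28800 * ℓ * δ ^ 2 / m) :
    (60 * c * (2 * √(20 * Real.exp 1 * q * (10 * c / m)) + 10 * c / m) + 5 / 2 * √c) / m +
      2 * √(10 * c) * √n * t ≤ 250000 * (c / m * √(a * c / m) + √c / m) ∧
    500000 * (c / m * √(a * c / m) + √c / m) ≤ 1 := by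
  have hc0 : 0 < c := by linarith
  have he3 : Real.exp 1 ≤ 3 := by have := Real.exp_one_lt_d9; linarith
  have hsc : 1 ≤ √c := by rw [Real.one_le_sqrt]; linarith
  have hscc : √c ≤ c := by
    nlinarith [Real.mul_self_sqrt hc0.le]
  have hcm : c / m ≤ 1 / 10 ^ 7 := by
    rw [div_le_div_iff₀ hm (by norm_num)]
    nlinarith
  set y := √(a * c / m) with hy
  have hy2 : y ^ 2 = a * c / m := Real.sq_sqrt (by positivity)
  have hy0 : 0 ≤ y := Real.sqrt_nonneg _
  have hy1 : y ≤ 1 := by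
    rw [hy, Real.sqrt_le_one, div_le_one hm]
    nlinarith [mul_le_mul_of_nonneg_right haℓ hc0.le, mul_pos hc0 (by linarith : 0 < ℓ)]
  have hcy : c / m ≤ y := by
    have : c / m ≤ a * c / m := by
      gcongr; nlinarith
    nlinarith
  have hD : √(20 * Real.exp 1 * q * (10 * c / m)) ≤ 35 * y := by
    rw [Real.sqrt_le_left (by positivity), mul_pow, hy2]
    calc 20 * Real.exp 1 * q * (10 * c / m) ≤ 20 * 3 * (2 * a) * (10 * c / m) := by gcongr
      _ = 1200 * (a * c / m) := by ring
      _ ≤ _ := by gcongr; norm_num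
  have hcn2 : √(10 * c) * √n ≤ 4 * n := by
    rw [← Real.sqrt_mul (by positivity), Real.sqrt_le_left (by positivity)]
    nlinarith
  have htail : 2 * √(10 * c) * √n * t ≤ 230400 * √c / m := by
    calc 2 * √(10 * c) * √n * t = 2 * (√(10 * c) * √n) * t := by ring
      _ ≤ 2 * (4 * n) * (28800 * n * δ ^ 2 / m) := by
          gcongr
          exact ht.trans (by gcongr)
      _ = 230400 * (n * δ) ^ 2 / m := by ring
      _ ≤ 230400 * 1 / m := by gcongr; exact pow_le_one₀ (by positivity) hnδ
      _ ≤ _ := by gcongr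
  constructor
  · calc _ ≤ (60 * c * (2 * (35 * y) + 10 * y) + 5 / 2 * √c) / m + 230400 * √c / m := by
          gcongr
          rw [mul_div_assoc]; gcongr
      _ = 4800 * (c / m * y) + 230402.5 * (√c / m) := by ring
      _ ≤ _ := by
          have h1 : 0 ≤ c / m * y := by positivity
          have h2 : 0 ≤ √c / m := by positivity
          nlinarith
  · have h1 : c / m * y ≤ c / m * 1 := by gcongr
    have h2 : √c / m ≤ c / m := by gcongr
    linarith

/-- Conditioning on an event of probability at least `1 / 2` at most doubles a truncated mean. -/
theorem conditional_abs_le {k N S B δ : ℝ} (hN : 0 < N) (hδ : δ ≤ 1) (hk : 1 - δ / 2 ≤ k / N)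
    (h : |S / N| ≤ B) : |k⁻¹ * S| ≤ 2 * B := by
  have hk0 : 0 < k / N := by linarith
  have e : k⁻¹ * S = S / N / (k / N) := by field_simp
  rw [e, abs_div, abs_of_pos hk0, div_le_iff₀ hk0]
  nlinarith [abs_nonneg (S / N)]

/-- One-sided bias bound: averaged over its good event, the sketched pseudo-inverse maps the
orthogonal complement of the range of `V` to vectors shorter by the factor `e`. -/
theorem one_sided {n c m : ℕ} (hn : 3 ≤ n) {H : Matrix (Fin n) (Fin n) ℝ}
    {V : Matrix (Fin n) (Fin c) ℝ} (hH1 : ∀ i j, H i j = 1 ∨ H i j = -1)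
    (hH : Hᵀ * H = (n : ℝ) • (1 : Matrix (Fin n) (Fin n) ℝ)) (hV : Vᵀ * V = 1) {δ : ℝ}
    (hδ1 : n * Real.exp (-c) < δ) (hδ2 : δ ≤ (n : ℝ) ^ (-3 : ℝ))
    (hmC : 10 ^ 7 * c * Real.log (c / δ) ≤ m) :
    0 < m ∧
    (1 - δ / 2) * Fintype.card ((Fin m → Fin n) × (Fin n → Bool)) ≤ (goodEvent m H V).card ∧
    (goodEvent m H V).Nonempty ∧
    ∃ e : ℝ, 0 ≤ e ∧ e ≤ 1 ∧
      e ≤ 10 ^ 6 * ((Real.log n / Real.log (Real.log n)) * √((c : ℝ) ^ 3 / m ^ 3) +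
        √(c * Real.log (n / δ)) / m) ∧
      ∀ v, Vᵀ *ᵥ v = 0 →
        ((((goodEvent m H V).card : ℝ)⁻¹ • ∑ z ∈ goodEvent m H V, pinvSketch H V z) *ᵥ v) ⬝ᵥ
          ((((goodEvent m H V).card : ℝ)⁻¹ • ∑ z ∈ goodEvent m H V, pinvSketch H V z) *ᵥ v) ≤
        e ^ 2 * (v ⬝ᵥ v) := by
  classical
  have hcn := orthonormal_card_le hV
  obtain ⟨hδ0, hnδ, hδ1', ha, hc4, haℓ, hℓ3, hℓn, hL1⟩ := range_facts hn hcn hδ1 hδ2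
  set ℓ := Real.log (c / δ) with hℓ
  set a := Real.log n with hadef
  have hn0 : 0 < n := by omega
  have : Nonempty (Fin n) := ⟨⟨0, hn0⟩⟩
  have hnR : (0 : ℝ) < n := by exact_mod_cast hn0
  have hc0 : (0 : ℝ) < c := by linarith
  have hcN : 0 < c := by exact_mod_cast hc0
  have hmR : (0 : ℝ) < m := lt_of_lt_of_le (by positivity) hmC
  have hm : 0 < m := by exact_mod_cast hmR
  have hcnR : (c : ℝ) ≤ n := by exact_mod_cast hcn
  -- `q₁` is the moment order for the tail of the Gram deviation, `q₂` the one for its mean;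
  -- `q₂ ≥ log n` is what makes `c ≤ exp q₂`
  set q₁ := ⌈2 * ℓ⌉₊ with hq₁
  set q₂ := ⌈a⌉₊ with hq₂
  have hq₁1 : 2 * ℓ ≤ q₁ := Nat.le_ceil _
  have hq₁2 : (q₁ : ℝ) ≤ 3 * ℓ := by
    have := Nat.ceil_lt_add_one (by linarith : 0 ≤ 2 * ℓ)
    linarith
  have hq₂1 : a ≤ q₂ := Nat.le_ceil _
  have hq₂2 : (q₂ : ℝ) ≤ 2 * a := by
    have := Nat.ceil_lt_add_one (by linarith : 0 ≤ a)
    linarith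
  have hq₁0 : q₁ ≠ 0 := by
    have : (0 : ℝ) < q₁ := by linarith
    exact_mod_cast this.ne'
  have hq₂0 : q₂ ≠ 0 := by
    have : (0 : ℝ) < q₂ := by linarith
    exact_mod_cast this.ne'
  have hsmall : ∀ q : ℝ, q ≤ 3 * ℓ → 4 * q * (10 * c / m) ≤ 1 := by
    intro q hq
    calc 4 * q * (10 * c / m) ≤ 4 * (3 * ℓ) * (10 * c / m) := by gcongr
      _ = 120 * c * ℓ / m := by ring
      _ ≤ 1 := by
        rw [div_le_one hmR]
        have : 0 < c * ℓ := by positivity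
        nlinarith
  set D := 2 * √(20 * Real.exp 1 * q₂ * (10 * c / m)) with hDdef
  set t := c * (320 * (q₁ : ℝ) * (10 * c / m)) ^ q₁ with htdef
  have ht0 : 0 ≤ t := by positivity
  obtain ⟨ht1, ht2⟩ := tail_numeric hc0 hmR hδ0 hℓ hℓ3 hmC
  have hcq : (c : ℝ) ≤ Real.exp q₂ := by
    calc (c : ℝ) ≤ n := hcnR
      _ = Real.exp a := (Real.exp_log hnR).symm
      _ ≤ _ := Real.exp_le_exp.2 hq₂1
  have hBm : 10 * c / (m : ℝ) ≤ 1 / 4 := by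
    have := hsmall 1 (by linarith)
    linarith
  obtain ⟨hP, hbil⟩ := one_sided_raw (H := H) (V := V) (m := m) hn0 hm hcN hH1 hH hV hBm
    (D := D) (t := t)
    (fun x hI hB => expect_norm_bound hn0 hm x hI (by positivity) hB q₂ hq₂0
      (hsmall _ (by linarith)) hcq)
    (fun x hI hB => tail_bound hn0 hm x hI (by positivity) hB q₁ hq₁0 (hsmall _ hq₁2))
    (by positivity) ht0
  obtain ⟨hb1, hb2⟩ := bias_numeric hnR hc4 hcnR hmR hδ0 hnδ ha haℓ hℓn hmC hq₂2
    (Nat.cast_nonneg q₂) ht0 ht2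
  set K := goodEvent m H V with hK
  have hcard : (0 : ℝ) < Fintype.card ((Fin m → Fin n) × (Fin n → Bool)) := by
    exact_mod_cast Fintype.card_pos
  have hmean : ∀ f : (Fin m → Fin n) × (Fin n → Bool) → ℝ,
      (𝔼 z, if z ∈ K then f z else 0) =
        (∑ z ∈ K, f z) / Fintype.card ((Fin m → Fin n) × (Fin n → Bool)) := by
    intro f
    rw [Fintype.expect_eq_sum_div_card, ← sum_filter]
    congr 2
    simp
  have hP' : 1 - δ / 2 ≤ (K.card : ℝ) / Fintype.card ((Fin m → Fin n) × (Fin n → Bool)) := by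
    have h1 := hmean fun _ => 1
    rw [sum_const, nsmul_eq_mul, mul_one] at h1
    rw [← h1]
    refine le_trans ?_ hP
    have h2 : n * Real.exp (-(2 * c)) ≤ δ / 4 := by
      have h4 : (4 : ℝ) ≤ Real.exp c := by
        have := Real.add_one_le_exp (c : ℝ)
        linarith
      have h5 : Real.exp (-(2 * (c : ℝ))) = Real.exp (-c) * (Real.exp c)⁻¹ := by
        rw [← Real.exp_neg, ← Real.exp_add]; ring_nf
      calc n * Real.exp (-(2 * c)) = n * Real.exp (-c) * (Real.exp c)⁻¹ := by rw [h5]; ring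
        _ ≤ δ * 4⁻¹ := by gcongr
        _ = _ := by ring
    have h3 : t ≤ δ / 4 := by
      refine ht1.trans ?_
      rw [div_le_div_iff₀ hc0 (by norm_num)]
      nlinarith
    linarith
  have hKc : 0 < (K.card : ℝ) / Fintype.card ((Fin m → Fin n) × (Fin n → Bool)) := by linarith
  have hKpos : (0 : ℝ) < K.card := by
    by_contra h
    have : (K.card : ℝ) = 0 := le_antisymm (not_lt.1 h) (Nat.cast_nonneg _)
    rw [this, zero_div] at hKc
    exact lt_irrefl _ hKc
  refine ⟨hm, (le_div_iff₀ hcard).1 hP', card_pos.1 (by exact_mod_cast hKpos),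
    500000 * (c / m * √(a * c / m) + √c / m), by positivity, hb2, ?_, ?_⟩
  · have h1 : c / m * √(a * c / m) = √a * √((c : ℝ) ^ 3 / m ^ 3) := by
      rw [← Real.sqrt_mul (by linarith), ← Real.sqrt_sq (by positivity : 0 ≤ (c : ℝ) / m),
        ← Real.sqrt_mul (by positivity)]
      congr 1; ring
    have h2 : √(c : ℝ) ≤ √(c * Real.log (n / δ)) := Real.sqrt_le_sqrt (by nlinarith)
    calc 500000 * (c / m * √(a * c / m) + √c / m)
        ≤ 500000 * (2 * (a / Real.log a) * √((c : ℝ) ^ 3 / m ^ 3) +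
            √(c * Real.log (n / δ)) / m) := by
          rw [h1]
          gcongr
          exact sqrt_le_div_log ha
      _ ≤ _ := by
          have : 0 ≤ √(c * Real.log (n / δ)) / m := by positivity
          linarith
  · refine quad_of_bilin fun u v hu hv hVv => ?_
    have h1 := hbil u v hu hv hVv
    rw [hmean] at h1
    rw [smul_mulVec, dotProduct_smul, sum_mulVec, dotProduct_sum, smul_eq_mul]
    set S := ∑ z ∈ K, u ⬝ᵥ (pinvSketch H V z *ᵥ v) with hS
    refine (conditional_abs_le hcard hδ1' hP' (h1.trans hb1)).trans (le_of_eq ?_)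
    ring

end

/-! ### Loss of a perturbed core matrix -/

section

section frob
variable {k l q : ℕ}

theorem trace_sq_cols (A : Matrix (Fin k) (Fin l) ℝ) :
    (Aᵀ * A).trace = ∑ j, Aᵀ j ⬝ᵥ Aᵀ j := rfl

theorem trace_sq_nonneg (A : Matrix (Fin k) (Fin l) ℝ) : 0 ≤ (Aᵀ * A).trace := by
  rw [trace_sq_cols]
  exact sum_nonneg fun _ _ => sum_nonneg fun _ _ => mul_self_nonneg _

theorem trace_sq_transpose (A : Matrix (Fin k) (Fin l) ℝ) :
    (Aᵀᵀ * Aᵀ).trace = (Aᵀ * A).trace := by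
  rw [transpose_transpose, trace_mul_comm]

theorem trace_sq_add_le (A B : Matrix (Fin k) (Fin l) ℝ) :
    ((A + B)ᵀ * (A + B)).trace ≤ 2 * ((Aᵀ * A).trace + (Bᵀ * B).trace) := by
  have h := trace_sq_nonneg (A - B)
  have e : ((A + B)ᵀ * (A + B)).trace + ((A - B)ᵀ * (A - B)).trace =
      2 * ((Aᵀ * A).trace + (Bᵀ * B).trace) := by
    simp only [transpose_add, transpose_sub, Matrix.add_mul, Matrix.sub_mul, Matrix.mul_add,
      Matrix.mul_sub, trace_add, trace_sub]
    ring
  linarith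

theorem frobNorm_sq (A : Matrix (Fin k) (Fin l) ℝ) : frobNorm A ^ 2 = (Aᵀ * A).trace :=
  Real.sq_sqrt (trace_sq_nonneg A)

/-- Pythagoras for the orthogonal projection `V Vᵀ` in Frobenius norm. -/
theorem trace_sq_pythagoras {V : Matrix (Fin k) (Fin q) ℝ} (hV : Vᵀ * V = 1)
    (A : Matrix (Fin k) (Fin l) ℝ) :
    (Aᵀ * A).trace =
      ((Vᵀ * A)ᵀ * (Vᵀ * A)).trace + ((A - V * (Vᵀ * A))ᵀ * (A - V * (Vᵀ * A))).trace := by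
  have h1 : (V * (Vᵀ * A))ᵀ * (V * (Vᵀ * A)) = (Vᵀ * A)ᵀ * (Vᵀ * A) := by
    rw [transpose_mul, Matrix.mul_assoc, ← Matrix.mul_assoc Vᵀ V, hV, Matrix.one_mul]
  have h2 : Aᵀ * (V * (Vᵀ * A)) = (Vᵀ * A)ᵀ * (Vᵀ * A) := by
    rw [← Matrix.mul_assoc, transpose_mul, transpose_transpose]
  have h3 : (V * (Vᵀ * A))ᵀ * A = (Vᵀ * A)ᵀ * (Vᵀ * A) := by
    rw [transpose_mul, Matrix.mul_assoc]
  rw [transpose_sub, Matrix.sub_mul, Matrix.mul_sub, Matrix.mul_sub, h1, h2, h3]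
  simp only [trace_sub]
  ring

theorem trace_sq_mul_le {V : Matrix (Fin k) (Fin q) ℝ} {M : Matrix (Fin q) (Fin k) ℝ} {e : ℝ}
    (h : ∀ v, Vᵀ *ᵥ v = 0 → (M *ᵥ v) ⬝ᵥ (M *ᵥ v) ≤ e ^ 2 * (v ⬝ᵥ v))
    {A : Matrix (Fin k) (Fin l) ℝ} (hA : Vᵀ * A = 0) :
    ((M * A)ᵀ * (M * A)).trace ≤ e ^ 2 * (Aᵀ * A).trace := by
  rw [trace_sq_cols, trace_sq_cols, mul_sum]
  refine sum_le_sum fun j _ => h (Aᵀ j) ?_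
  ext i
  exact congr_fun (congr_fun hA i) j

/-- Excess loss when the orthonormal pseudo-inverses `Vᵀ`, `Wᵀ` are replaced by left inverses `M`, `L`
of `V`, `W` which nearly vanish on the complements. With `N` the optimal residual, the loss
difference is exactly `‖M N Lᵀ‖²`, because `V (M N Lᵀ) Wᵀ` is orthogonal to `N`; and `Vᵀ N W = 0` makes
`M N Lᵀ` small. -/
theorem loss_perturbation {n p c r : ℕ} {V : Matrix (Fin n) (Fin c) ℝ}
    {W : Matrix (Fin p) (Fin r) ℝ} (hV : Vᵀ * V = 1) (hW : Wᵀ * W = 1)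
    {M : Matrix (Fin c) (Fin n) ℝ} {L : Matrix (Fin r) (Fin p) ℝ} (hM : M * V = 1)
    (hL : L * W = 1) {e e' : ℝ} (he : 0 ≤ e) (he' : 0 ≤ e') (he1 : e' ≤ 1)
    (hMe : ∀ v, Vᵀ *ᵥ v = 0 → (M *ᵥ v) ⬝ᵥ (M *ᵥ v) ≤ e ^ 2 * (v ⬝ᵥ v))
    (hLe : ∀ v, Wᵀ *ᵥ v = 0 → (L *ᵥ v) ⬝ᵥ (L *ᵥ v) ≤ e' ^ 2 * (v ⬝ᵥ v))
    (X : Matrix (Fin n) (Fin p) ℝ) :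
    frobNorm (V * (M * X * Lᵀ) * Wᵀ - X) ^ 2 - frobNorm (V * (Vᵀ * X * W) * Wᵀ - X) ^ 2 ≤
      (3 * (e + e')) ^ 2 * frobNorm (V * (Vᵀ * X * W) * Wᵀ - X) ^ 2 := by
  set N := V * (Vᵀ * X * W) * Wᵀ - X with hN
  have hLt : Wᵀ * Lᵀ = 1 := by rw [← transpose_mul, hL, transpose_one]
  set Y := M * (N * Lᵀ) with hY
  have hNY : Y = Vᵀ * X * W - M * X * Lᵀ := by
    have : M * (V * (Vᵀ * X * W) * Wᵀ * Lᵀ) = (M * V) * (Vᵀ * X * W) * (Wᵀ * Lᵀ) := by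
      simp only [Matrix.mul_assoc]
    rw [hY, hN, Matrix.sub_mul, Matrix.mul_sub, this, hM, hLt, Matrix.one_mul, Matrix.mul_one,
      ← Matrix.mul_assoc M X]
  have hVNW : Vᵀ * N * W = 0 := by
    have : Vᵀ * (V * (Vᵀ * X * W) * Wᵀ) * W = (Vᵀ * V) * (Vᵀ * X * W) * (Wᵀ * W) := by
      simp only [Matrix.mul_assoc]
    rw [hN, Matrix.mul_sub, Matrix.sub_mul, this, hV, hW, Matrix.one_mul, Matrix.mul_one, sub_self]
  have hdiff : V * (M * X * Lᵀ) * Wᵀ - X = N - V * Y * Wᵀ := by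
    rw [hNY, Matrix.mul_sub, Matrix.sub_mul, hN]; abel
  clear_value Y N
  -- the error `V Y Wᵀ` is orthogonal to the residual `N`
  have hloss : frobNorm (V * (M * X * Lᵀ) * Wᵀ - X) ^ 2 =
      frobNorm N ^ 2 + (Yᵀ * Y).trace := by
    have hWNV : Wᵀ * Nᵀ * V = 0 := by
      have := congr_arg transpose hVNW
      rwa [transpose_mul, transpose_mul, transpose_transpose, transpose_zero,
        ← Matrix.mul_assoc] at this
    have h1 : (Nᵀ * (V * Y * Wᵀ)).trace = 0 := by
      rw [← Matrix.mul_assoc, trace_mul_comm, ← Matrix.mul_assoc, ← Matrix.mul_assoc,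
        hWNV, Matrix.zero_mul, trace_zero]
    have h2 : ((V * Y * Wᵀ)ᵀ * N).trace = 0 := by
      rw [← trace_transpose, transpose_mul, transpose_transpose, h1]
    have h3 : ((V * Y * Wᵀ)ᵀ * (V * Y * Wᵀ)).trace = (Yᵀ * Y).trace := by
      have : (V * Y * Wᵀ)ᵀ * (V * Y * Wᵀ) = W * (Yᵀ * (Vᵀ * V) * Y * Wᵀ) := by
        simp only [transpose_mul, transpose_transpose, Matrix.mul_assoc]
      rw [this, hV, Matrix.mul_one, trace_mul_comm, Matrix.mul_assoc, hW, Matrix.mul_one]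
    rw [hdiff, frobNorm_sq, frobNorm_sq, transpose_sub, Matrix.sub_mul, Matrix.mul_sub,
      Matrix.mul_sub, trace_sub, trace_sub, trace_sub, h1, h2, h3]
    ring
  have hNn := trace_sq_nonneg N
  -- `N Lᵀ` is bounded in Frobenius norm by a multiple of `N`
  have hG : ((N * Lᵀ)ᵀ * (N * Lᵀ)).trace ≤ 4 * (Nᵀ * N).trace := by
    have e1 : (N * Lᵀ)ᵀ = L * (Nᵀ - W * (Wᵀ * Nᵀ)) + Wᵀ * Nᵀ := by
      rw [Matrix.mul_sub, ← Matrix.mul_assoc L W, hL, Matrix.one_mul, sub_add_cancel,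
        transpose_mul, transpose_transpose]
    have h0 : Wᵀ * (Nᵀ - W * (Wᵀ * Nᵀ)) = 0 := by
      rw [Matrix.mul_sub, ← Matrix.mul_assoc Wᵀ W, hW, Matrix.one_mul, sub_self]
    have h1 := trace_sq_mul_le hLe h0
    have h2 := trace_sq_pythagoras hW Nᵀ
    rw [trace_sq_transpose] at h2
    have h3 := trace_sq_add_le (L * (Nᵀ - W * (Wᵀ * Nᵀ))) (Wᵀ * Nᵀ)
    rw [← e1, trace_sq_transpose] at h3
    have h4 := trace_sq_nonneg (Wᵀ * Nᵀ)
    have h5 := trace_sq_nonneg (Nᵀ - W * (Wᵀ * Nᵀ))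
    have h6 : e' ^ 2 ≤ 1 := pow_le_one₀ he' he1
    nlinarith
  have hYb : (Yᵀ * Y).trace ≤ 8 * (e ^ 2 + e' ^ 2) * (Nᵀ * N).trace := by
    set G := N * Lᵀ with hGdef
    have e1 : Y = M * (G - V * (Vᵀ * G)) + Vᵀ * G := by
      rw [Matrix.mul_sub, ← Matrix.mul_assoc M V, hM, Matrix.one_mul, sub_add_cancel, ← hY]
    have h0 : Vᵀ * (G - V * (Vᵀ * G)) = 0 := by
      rw [Matrix.mul_sub, ← Matrix.mul_assoc Vᵀ V, hV, Matrix.one_mul, sub_self]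
    have h1 := trace_sq_mul_le hMe h0
    have h2 := trace_sq_pythagoras hV G
    have h3 := trace_sq_add_le (M * (G - V * (Vᵀ * G))) (Vᵀ * G)
    rw [← e1] at h3
    have h4 := trace_sq_nonneg (Vᵀ * G)
    have h5 : ((Vᵀ * G)ᵀ * (Vᵀ * G)).trace ≤ e' ^ 2 * (Nᵀ * N).trace := by
      have e2 : Vᵀ * G = (L * (Vᵀ * N)ᵀ)ᵀ := by
        rw [transpose_mul, transpose_transpose, hGdef, Matrix.mul_assoc]
      have h6 : Wᵀ * (Vᵀ * N)ᵀ = 0 := by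
        rw [← transpose_mul, hVNW, transpose_zero]
      have h7 := trace_sq_mul_le hLe h6
      have h8 := trace_sq_pythagoras hV N
      have h9 := trace_sq_nonneg (N - V * (Vᵀ * N))
      rw [trace_sq_transpose] at h7
      rw [e2, trace_sq_transpose]
      exact h7.trans (by gcongr; linarith)
    have h6 : e ^ 2 * ((G - V * (Vᵀ * G))ᵀ * (G - V * (Vᵀ * G))).trace ≤
        e ^ 2 * (4 * (Nᵀ * N).trace) := by gcongr; linarith
    have h7 : 0 ≤ e' ^ 2 * (Nᵀ * N).trace := by positivity
    linarith
  rw [hloss, frobNorm_sq, add_sub_cancel_left]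
  refine hYb.trans (mul_le_mul_of_nonneg_right ?_ hNn)
  nlinarith [mul_nonneg he he']
end frob

end

/-! ### Reduction to orthonormal factors -/

section

/-- Full column rank factorisation `C = V T` with orthonormal columns of `V`; here `T` is a square
root of `Cᵀ C`. -/
theorem exists_orthonormal_factor {n c : ℕ} {C : Matrix (Fin n) (Fin c) ℝ}
    (hC : IsUnit (Cᵀ * C).det) :
    ∃ (V : Matrix (Fin n) (Fin c) ℝ) (T : Matrix (Fin c) (Fin c) ℝ),
      Vᵀ * V = 1 ∧ IsUnit T.det ∧ C = V * T := by
  have hpsd : (Cᵀ * C).PosSemidef := by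
    have := posSemidef_conjTranspose_mul_self C
    rwa [conjTranspose_eq_transpose_of_trivial] at this
  have hT : ∃ T : Matrix (Fin c) (Fin c) ℝ, Cᵀ * C = Tᵀ * T := by
    open scoped MatrixOrder Matrix.Norms.L2Operator in
    obtain ⟨T, hT⟩ := CStarAlgebra.nonneg_iff_eq_star_mul_self.mp hpsd.nonneg
    exact ⟨T, by rwa [star_eq_conjTranspose, conjTranspose_eq_transpose_of_trivial] at hT⟩
  obtain ⟨T, hT⟩ := hT
  have hTu : IsUnit T.det := by
    rw [hT, det_mul] at hC
    exact isUnit_of_mul_isUnit_right hC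
  refine ⟨C * T⁻¹, T, ?_, hTu, ?_⟩
  · rw [transpose_mul, Matrix.mul_assoc, ← Matrix.mul_assoc Cᵀ, hT, transpose_nonsing_inv,
      ← Matrix.mul_assoc, ← Matrix.mul_assoc,
      nonsing_inv_mul _ (by rwa [det_transpose]), Matrix.one_mul, mul_nonsing_inv _ hTu]
  · rw [Matrix.mul_assoc, nonsing_inv_mul _ hTu, Matrix.mul_one]

theorem samplingS_mul {n m k : ℕ} (ω : Fin m → Fin n) (Y : Matrix (Fin n) (Fin k) ℝ) :
    samplingS (fun _ => (n : ℝ)⁻¹) ω * Y = (1 / √(m * (n : ℝ)⁻¹)) • Y.submatrix ω id := by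
  ext s j
  simp [samplingS, Matrix.mul_apply, Finset.sum_ite_eq']

/-- The factor by which the sampled rows of `H D(ξ)` are rescaled. -/
noncomputable def sketchScale (n m : ℕ) : ℝ := 1 / √(m * (n : ℝ)⁻¹) * (√n)⁻¹

theorem sampled_CHD {n c m : ℕ} (H : Matrix (Fin n) (Fin n) ℝ) (C : Matrix (Fin n) (Fin c) ℝ)
    (z : (Fin m → Fin n) × (Fin n → Bool)) :
    samplingS (fun _ => (n : ℝ)⁻¹) z.1 * CHD H C z.2 =
      sketchScale n m • ((H * Dsgn z.2).submatrix z.1 id * C) := by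
  rw [CHD, Matrix.mul_smul, samplingS_mul, smul_smul, mul_comm, sketchScale]
  rfl

theorem sketchScale_ne_zero {n m : ℕ} (hn : 0 < n) (hm : 0 < m) : sketchScale n m ≠ 0 := by
  rw [sketchScale]; positivity

/-- Sketched least squares is invariant under rescaling the sketch and equivariant under change of
basis of the column space. -/
theorem sampled_pinv {n c m : ℕ} {k : ℝ} (hk : k ≠ 0) {V : Matrix (Fin n) (Fin c) ℝ}
    {T : Matrix (Fin c) (Fin c) ℝ} (hT : IsUnit T.det) {A : Matrix (Fin m) (Fin n) ℝ}
    (hA : IsUnit ((A * V)ᵀ * (A * V)).det) :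
    IsUnit ((k • (A * (V * T)))ᵀ * (k • (A * (V * T)))).det ∧
    ((k • (A * (V * T)))ᵀ * (k • (A * (V * T))))⁻¹ * (k • (A * (V * T)))ᵀ * (k • A) =
      T⁻¹ * (((A * V)ᵀ * (A * V))⁻¹ * (A * V)ᵀ * A) := by
  obtain ⟨B, hB⟩ : ∃ B, B = A * V := ⟨_, rfl⟩
  rw [← hB] at hA ⊢
  have hTt : IsUnit Tᵀ.det := by rwa [det_transpose]
  have e : (k • (A * (V * T)))ᵀ * (k • (A * (V * T))) = (k * k) • (Tᵀ * (Bᵀ * B) * T) := by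
    rw [transpose_smul, smul_mul, Matrix.mul_smul, smul_smul, ← Matrix.mul_assoc A V, ← hB,
      transpose_mul]
    simp only [Matrix.mul_assoc]
  have hinv : ((k * k) • (Tᵀ * (Bᵀ * B) * T))⁻¹ =
      (k * k)⁻¹ • (T⁻¹ * (Bᵀ * B)⁻¹ * Tᵀ⁻¹) := by
    refine inv_eq_left_inv ?_
    rw [smul_mul, Matrix.mul_smul, smul_smul, inv_mul_cancel₀ (mul_ne_zero hk hk), one_smul]
    rw [Matrix.mul_assoc Tᵀ, Matrix.mul_assoc _ Tᵀ⁻¹, nonsing_inv_mul_cancel_left _ _ hTt,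
      Matrix.mul_assoc T⁻¹, nonsing_inv_mul_cancel_left _ _ hA, nonsing_inv_mul _ hT]
  constructor
  · rw [e, det_smul, det_mul, det_mul]
    exact ((isUnit_iff_ne_zero.2 (mul_ne_zero hk hk)).pow _).mul ((hTt.mul hA).mul hT)
  · rw [e, hinv, ← Matrix.mul_assoc A V, ← hB, transpose_smul, transpose_mul]
    simp only [smul_mul, Matrix.mul_smul, smul_smul]
    rw [show k * (k * (k * k)⁻¹) = 1 by field_simp, one_smul]
    simp only [Matrix.mul_assoc]
    rw [nonsing_inv_mul_cancel_left _ _ hTt]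

theorem two_sided_assoc {n p c r mc mr : ℕ} (B₁ : Matrix (Fin mc) (Fin c) ℝ)
    (B₂ : Matrix (Fin mr) (Fin r) ℝ) (A₁ : Matrix (Fin mc) (Fin n) ℝ)
    (A₂ : Matrix (Fin mr) (Fin p) ℝ) (X : Matrix (Fin n) (Fin p) ℝ) :
    (B₁ᵀ * B₁)⁻¹ * B₁ᵀ * (A₁ * X * A₂ᵀ) * B₂ * (B₂ᵀ * B₂)⁻¹ =
      ((B₁ᵀ * B₁)⁻¹ * B₁ᵀ * A₁) * X * ((B₂ᵀ * B₂)⁻¹ * B₂ᵀ * A₂)ᵀ := by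
  simp only [transpose_mul, transpose_nonsing_inv, transpose_transpose, Matrix.mul_assoc]

theorem RHDT_eq {p r : ℕ} (H : Matrix (Fin p) (Fin p) ℝ) (R : Matrix (Fin r) (Fin p) ℝ)
    (η : Fin p → Bool) : RHDT H R η = CHD H Rᵀ η := rfl

theorem Dsgn_transpose {n : ℕ} (ξ : Fin n → Bool) : (Dsgn ξ)ᵀ = Dsgn ξ := diagonal_transpose _

theorem XtilSRHT_eq {n p mc mr : ℕ} (Hn : Matrix (Fin n) (Fin n) ℝ) (Hp : Matrix (Fin p) (Fin p) ℝ)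
    (X : Matrix (Fin n) (Fin p) ℝ) (x : (Fin mc → Fin n) × (Fin n → Bool))
    (y : (Fin mr → Fin p) × (Fin p → Bool)) :
    XtilSRHT Hn Hp X (x.1, y.1, x.2, y.2) =
      (sketchScale n mc • (Hn * Dsgn x.2).submatrix x.1 id) * X *
        (sketchScale p mr • (Hp * Dsgn y.2).submatrix y.1 id)ᵀ := by
  have e : samplingS (fun _ => (n : ℝ)⁻¹) x.1 * Hn * Dsgn x.2 * X * Dsgn y.2 * Hpᵀ *
      (samplingS (fun _ => (p : ℝ)⁻¹) y.1)ᵀ =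
      (samplingS (fun _ => (n : ℝ)⁻¹) x.1 * (Hn * Dsgn x.2)) * X *
        (samplingS (fun _ => (p : ℝ)⁻¹) y.1 * (Hp * Dsgn y.2))ᵀ := by
    simp only [transpose_mul, Dsgn_transpose, Matrix.mul_assoc]
  rw [XtilSRHT]
  dsimp only
  rw [e, samplingS_mul, samplingS_mul, Real.sqrt_mul (Nat.cast_nonneg n)]
  simp only [sketchScale, transpose_smul, smul_mul, Matrix.mul_smul, smul_smul]
  congr 1
  rw [mul_inv]; ring

/-- On the product of the two good events the estimator is well defined and factors through the
sketched pseudo-inverses of the orthonormal factors. -/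
theorem curUsrht_eq {n p c r mc mr : ℕ} (hn : 0 < n) (hp : 0 < p) (hmc : 0 < mc) (hmr : 0 < mr)
    {Hn : Matrix (Fin n) (Fin n) ℝ} {Hp : Matrix (Fin p) (Fin p) ℝ}
    {X : Matrix (Fin n) (Fin p) ℝ} {Cm : Matrix (Fin n) (Fin c) ℝ} {Rm : Matrix (Fin r) (Fin p) ℝ}
    {V : Matrix (Fin n) (Fin c) ℝ} {T : Matrix (Fin c) (Fin c) ℝ} (hT : IsUnit T.det)
    (hC : Cm = V * T) {W : Matrix (Fin p) (Fin r) ℝ} {S : Matrix (Fin r) (Fin r) ℝ}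
    (hS : IsUnit S.det) (hR : Rmᵀ = W * S)
    {x : (Fin mc → Fin n) × (Fin n → Bool)} {y : (Fin mr → Fin p) × (Fin p → Bool)}
    (hx : x ∈ goodEvent mc Hn V) (hy : y ∈ goodEvent mr Hp W) :
    IsUnit ((samplingS (fun _ => (n : ℝ)⁻¹) x.1 * CHD Hn Cm x.2)ᵀ *
      (samplingS (fun _ => (n : ℝ)⁻¹) x.1 * CHD Hn Cm x.2)).det ∧
    IsUnit ((RHDT Hp Rm y.2)ᵀ * (samplingS (fun _ => (p : ℝ)⁻¹) y.1)ᵀ *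
      samplingS (fun _ => (p : ℝ)⁻¹) y.1 * RHDT Hp Rm y.2).det ∧
    curUsrht Hn Hp X Cm Rm (x.1, y.1, x.2, y.2) =
      T⁻¹ * (pinvSketch Hn V x * X * (pinvSketch Hp W y)ᵀ) * (S⁻¹)ᵀ := by
  have e1 : (RHDT Hp Rm y.2)ᵀ * (samplingS (fun _ => (p : ℝ)⁻¹) y.1)ᵀ *
      samplingS (fun _ => (p : ℝ)⁻¹) y.1 * RHDT Hp Rm y.2 =
      (samplingS (fun _ => (p : ℝ)⁻¹) y.1 * RHDT Hp Rm y.2)ᵀ *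
        (samplingS (fun _ => (p : ℝ)⁻¹) y.1 * RHDT Hp Rm y.2) := by
    rw [transpose_mul, Matrix.mul_assoc]
  obtain ⟨u1, i1⟩ := sampled_pinv (sketchScale_ne_zero hn hmc) hT (isUnit_sampled_gram hmc hx)
  obtain ⟨u2, i2⟩ := sampled_pinv (sketchScale_ne_zero hp hmr) hS (isUnit_sampled_gram hmr hy)
  rw [← pinvSketch] at i1 i2
  subst hC
  rw [e1, RHDT_eq, sampled_CHD, sampled_CHD, hR]
  refine ⟨u1, u2, ?_⟩
  rw [curUsrht]
  dsimp only
  rw [e1, RHDT_eq, sampled_CHD, sampled_CHD, hR, XtilSRHT_eq, two_sided_assoc, i1, i2]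
  simp only [transpose_mul, Matrix.mul_assoc]

end

/-! ### Averaging over the joint sample space -/

section

/-- Reordering of the sample space that pairs each sampling sequence with its sign vector. -/
def regroup (α β γ ε : Type*) : (α × γ) × (β × ε) ≃ α × β × γ × ε where
  toFun w := (w.1.1, w.2.1, w.1.2, w.2.2)
  invFun z := ((z.1, z.2.2.1), (z.2.1, z.2.2.2))
  left_inv _ := rfl
  right_inv _ := rfl

theorem curSrhtP_eq (n p mc mr : ℕ)
    (z : (Fin mc → Fin n) × (Fin mr → Fin p) × (Fin n → Bool) × (Fin p → Bool)) :
    curSrhtP n p mc mr z = (Fintype.card ((Fin mc → Fin n) × (Fin n → Bool)) : ℝ)⁻¹ *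
      (Fintype.card ((Fin mr → Fin p) × (Fin p → Bool)) : ℝ)⁻¹ := by
  simp only [curSrhtP, samplingP, prod_const, card_univ, Fintype.card_fin, Fintype.card_prod,
    Fintype.card_fun, Fintype.card_bool]
  push_cast
  simp only [one_div, inv_pow, mul_inv]
  ring

/-- For a uniform law, the conditional expectation is the plain average over the event. -/
theorem condExp_of_const {Ω V : Type*} [AddCommGroup V] [Module ℝ V] {P : Ω → ℝ} {κ : ℝ}
    (hκ : κ ≠ 0) (hP : ∀ z, P z = κ) (ζ : Finset Ω) (f : Ω → V) :
    condExp P ζ f = (ζ.card : ℝ)⁻¹ • ∑ z ∈ ζ, f z := by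
  simp only [condExp, eventProb, hP, sum_const, nsmul_eq_mul, ← smul_sum, smul_smul]
  rw [mul_inv, mul_assoc, inv_mul_cancel₀ hκ, mul_one]

/-- Averaging over a product event averages the two sketches separately, as the estimator is
bilinear in them. -/
theorem average_two_sided {ι κ : Type*} {n p c r c' r' : ℕ} (E : Finset ι) (E' : Finset κ)
    (Z : ι → Matrix (Fin c) (Fin n) ℝ) (Z' : κ → Matrix (Fin r) (Fin p) ℝ)
    (X : Matrix (Fin n) (Fin p) ℝ) (A : Matrix (Fin c') (Fin c) ℝ) (B : Matrix (Fin r) (Fin r') ℝ) :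
    ((E.card * E'.card : ℕ) : ℝ)⁻¹ • ∑ x ∈ E, ∑ y ∈ E', A * (Z x * X * (Z' y)ᵀ) * B =
      A * (((E.card : ℝ)⁻¹ • ∑ x ∈ E, Z x) * X * ((E'.card : ℝ)⁻¹ • ∑ y ∈ E', Z' y)ᵀ) * B := by
  simp only [transpose_smul, transpose_sum, smul_mul, Matrix.mul_smul, Matrix.sum_mul,
    Matrix.mul_sum, ← smul_sum, smul_smul]
  push_cast
  rw [mul_inv, mul_comm (E.card : ℝ)⁻¹, sum_comm]

theorem average_mul_one {ι : Type*} {n c : ℕ} {E : Finset ι} (hE : E.Nonempty)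
    {Z : ι → Matrix (Fin c) (Fin n) ℝ} {V : Matrix (Fin n) (Fin c) ℝ} (h : ∀ z ∈ E, Z z * V = 1) :
    ((E.card : ℝ)⁻¹ • ∑ z ∈ E, Z z) * V = 1 := by
  have hc : (E.card : ℝ) ≠ 0 := by exact_mod_cast hE.card_pos.ne'
  rw [smul_mul, Matrix.sum_mul, sum_congr rfl h, sum_const, ← Nat.cast_smul_eq_nsmul ℝ, smul_smul,
    inv_mul_cancel₀ hc, one_smul]

theorem loss_factor {n p c r : ℕ} {X : Matrix (Fin n) (Fin p) ℝ} {Cm : Matrix (Fin n) (Fin c) ℝ}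
    {Rm : Matrix (Fin r) (Fin p) ℝ} {V : Matrix (Fin n) (Fin c) ℝ} {T : Matrix (Fin c) (Fin c) ℝ}
    (hT : IsUnit T.det) (hC : Cm = V * T) {W : Matrix (Fin p) (Fin r) ℝ}
    {S : Matrix (Fin r) (Fin r) ℝ} (hS : IsUnit S.det) (hR : Rmᵀ = W * S)
    (Y : Matrix (Fin c) (Fin r) ℝ) :
    lossCUR X Cm Rm (T⁻¹ * Y * (S⁻¹)ᵀ) = frobNorm (V * Y * Wᵀ - X) ^ 2 := by
  have hR' : Rm = Sᵀ * Wᵀ := by rw [← transpose_mul, ← hR, transpose_transpose]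
  have hSt : IsUnit Sᵀ.det := by rwa [det_transpose]
  have e : Cm * (T⁻¹ * Y * (S⁻¹)ᵀ) * Rm = V * Y * Wᵀ := by
    rw [hC, hR', transpose_nonsing_inv]
    simp only [Matrix.mul_assoc]
    rw [mul_nonsing_inv_cancel_left _ _ hT, nonsing_inv_mul_cancel_left _ _ hSt]
  rw [lossCUR, e]

theorem optCUR_factor {n p c r : ℕ} {X : Matrix (Fin n) (Fin p) ℝ} {Cm : Matrix (Fin n) (Fin c) ℝ}
    {Rm : Matrix (Fin r) (Fin p) ℝ} {V : Matrix (Fin n) (Fin c) ℝ} {T : Matrix (Fin c) (Fin c) ℝ}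
    (hV : Vᵀ * V = 1) (hT : IsUnit T.det) (hC : Cm = V * T) {W : Matrix (Fin p) (Fin r) ℝ}
    {S : Matrix (Fin r) (Fin r) ℝ} (hW : Wᵀ * W = 1) (hS : IsUnit S.det) (hR : Rmᵀ = W * S) :
    optCUR X Cm Rm = T⁻¹ * (Vᵀ * X * W) * (S⁻¹)ᵀ := by
  have hR' : Rm = Sᵀ * Wᵀ := by rw [← transpose_mul, ← hR, transpose_transpose]
  have hSt : IsUnit Sᵀ.det := by rwa [det_transpose]
  have hTt : IsUnit Tᵀ.det := by rwa [det_transpose]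
  have e1 : Cmᵀ * Cm = Tᵀ * T := by
    rw [hC, transpose_mul, Matrix.mul_assoc, ← Matrix.mul_assoc Vᵀ, hV, Matrix.one_mul]
  have e2 : Rm * Rmᵀ = Sᵀ * S := by
    rw [hR, hR', Matrix.mul_assoc, ← Matrix.mul_assoc Wᵀ, hW, Matrix.one_mul]
  rw [optCUR, e1, e2, hR, hC, Matrix.mul_inv_rev, Matrix.mul_inv_rev, transpose_mul,
    transpose_nonsing_inv]
  simp only [Matrix.mul_assoc]
  rw [nonsing_inv_mul_cancel_left _ _ hTt, mul_nonsing_inv_cancel_left _ _ hS]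

theorem rpow_range {n : ℕ} (hn : 3 ≤ n) {α δ : ℝ} (hα : 0 < α)
    (hδ : δ ≤ (n : ℝ) ^ (-(3 + α))) : δ ≤ (n : ℝ) ^ (-3 : ℝ) :=
  hδ.trans (Real.rpow_le_rpow_of_exponent_le (by exact_mod_cast (by omega : 1 ≤ n)) (by linarith))

end

/-- **Bias of fast CUR under SRHT** (Corollary F.3, bias part): there are
absolute constants `C₀, C' > 0` such that, for Hadamard matrices `H_n, H_p` and
exponents `α_c, α_r` satisfying the row-norm conditions for every sign vector,
for `max{n e^{−c}, p e^{−r}} < δ ≤ min{n^{−(3+α_c)}, p^{−(3+α_r)}}`,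
`m_c ≥ C₀ c log(c/δ)` and `m_r ≥ C₀ r log(r/δ)`, there is an event `ζ` in the
joint sample space of probability at least `1 − δ` on which all inverted
matrices in `Ũ` are invertible and `Bias_ζ(Ũ) ≤ ε² L(U_CUR)`, where
`ε = C' ((log n/log log n)√(c³/m_c³) + √(c log(n/δ))/m_c +
        (log p/log log p)√(r³/m_r³) + √(r log(p/δ))/m_r)`. -/
theorem fast_cur_srht_bias :
    ∃ C₀ C' : ℝ, 0 < C₀ ∧ 0 < C' ∧
      ∀ (n p c r mc mr : ℕ) (X : Matrix (Fin n) (Fin p) ℝ)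
        (Cm : Matrix (Fin n) (Fin c) ℝ) (Rm : Matrix (Fin r) (Fin p) ℝ)
        (g : Fin c → Fin p) (f : Fin r → Fin n)
        (Hn : Matrix (Fin n) (Fin n) ℝ) (Hp : Matrix (Fin p) (Fin p) ℝ)
        (αc αr : ℝ),
        3 ≤ n → 3 ≤ p →
        Function.Injective g → Cm = X.submatrix id g →
        Function.Injective f → Rm = X.submatrix f id →
        IsUnit (Cmᵀ * Cm).det → IsUnit (Rm * Rmᵀ).det →
        (∀ i j, Hn i j = 1 ∨ Hn i j = -1) →
        Hnᵀ * Hn = (n : ℝ) • (1 : Matrix (Fin n) (Fin n) ℝ) →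
        (∀ i j, Hp i j = 1 ∨ Hp i j = -1) →
        Hpᵀ * Hp = (p : ℝ) • (1 : Matrix (Fin p) (Fin p) ℝ) →
        0 < αc → 0 < αr →
        (∀ (ξ : Fin n → Bool) (i : Fin n), CHD Hn Cm ξ i ≠ 0 →
          (n : ℝ) ^ (-αc)
            ≤ (CHD Hn Cm ξ i ⬝ᵥ CHD Hn Cm ξ i) / frobNorm (CHD Hn Cm ξ) ^ 2) →
        (∀ (η : Fin p → Bool) (j : Fin p), RHDT Hp Rm η j ≠ 0 →
          (p : ℝ) ^ (-αr)
            ≤ (RHDT Hp Rm η j ⬝ᵥ RHDT Hp Rm η j) / frobNorm (RHDT Hp Rm η) ^ 2) →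
        ∀ δ : ℝ,
          (n : ℝ) * Real.exp (-(c : ℝ)) < δ →
          (p : ℝ) * Real.exp (-(r : ℝ)) < δ →
          δ ≤ (n : ℝ) ^ (-(3 + αc)) → δ ≤ (p : ℝ) ^ (-(3 + αr)) →
        C₀ * c * Real.log (c / δ) ≤ mc →
        C₀ * r * Real.log (r / δ) ≤ mr →
        ∃ ζ : Finset
            ((Fin mc → Fin n) × (Fin mr → Fin p) × (Fin n → Bool) × (Fin p → Bool)),
          1 - δ ≤ eventProb (curSrhtP n p mc mr) ζ ∧
          (∀ z ∈ ζ,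
            IsUnit ((samplingS (fun _ => (n : ℝ)⁻¹) z.1 * CHD Hn Cm z.2.2.1)ᵀ *
              (samplingS (fun _ => (n : ℝ)⁻¹) z.1 * CHD Hn Cm z.2.2.1)).det ∧
            IsUnit ((RHDT Hp Rm z.2.2.2)ᵀ * (samplingS (fun _ => (p : ℝ)⁻¹) z.2.1)ᵀ *
              samplingS (fun _ => (p : ℝ)⁻¹) z.2.1 * RHDT Hp Rm z.2.2.2).det) ∧
          lossCUR X Cm Rm (condExp (curSrhtP n p mc mr) ζ (curUsrht Hn Hp X Cm Rm)) -
              lossCUR X Cm Rm (optCUR X Cm Rm)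
            ≤ (C' * ((Real.log n / Real.log (Real.log n)) *
                    Real.sqrt ((c : ℝ) ^ 3 / mc ^ 3) +
                  Real.sqrt (c * Real.log (n / δ)) / mc +
                  (Real.log p / Real.log (Real.log p)) *
                    Real.sqrt ((r : ℝ) ^ 3 / mr ^ 3) +
                  Real.sqrt (r * Real.log (p / δ)) / mr)) ^ 2 *
              lossCUR X Cm Rm (optCUR X Cm Rm) := by
  -- `10 ^ 6` comes from `one_sided`, the factor `3` from `loss_perturbation`
  refine ⟨10 ^ 7, 3 * 10 ^ 6, by norm_num, by norm_num, ?_⟩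
  intro n p c r mc mr X Cm Rm g f Hn Hp αc αr hn hp _ _ _ _ hCu hRu hHn1 hHn hHp1 hHp hαc hαr _ _ δ
    hδc hδr hδn hδp hmc hmr
  obtain ⟨V, T, hV, hT, hC⟩ := exists_orthonormal_factor hCu
  obtain ⟨W, S, hW, hS, hR⟩ := exists_orthonormal_factor (C := Rmᵀ) (by rwa [transpose_transpose])
  have hδ3 := rpow_range hn hαc hδn
  obtain ⟨hmc0, hPc, hEc, e, he0, -, hec, hMe⟩ := one_sided hn hHn1 hHn hV hδc hδ3 hmc
  obtain ⟨hmr0, hPr, hEr, e', he0', he1', her, hLe⟩ :=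
    one_sided hp hHp1 hHp hW hδr (rpow_range hp hαr hδp) hmr
  obtain ⟨-, -, hδ1, -⟩ := range_facts hn (orthonormal_card_le hV) hδc hδ3
  set E := goodEvent mc Hn V with hE
  set E' := goodEvent mr Hp W with hE'
  set Nc : ℝ := (Fintype.card ((Fin mc → Fin n) × (Fin n → Bool)) : ℝ) with hNc
  set Nr : ℝ := (Fintype.card ((Fin mr → Fin p) × (Fin p → Bool)) : ℝ) with hNr
  have hNc0 : 0 < Nc := by
    have : (Fintype.card ((Fin mc → Fin n) × (Fin n → Bool))) ≠ 0 :=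
      have := hEc.to_type
      Fintype.card_ne_zero
    positivity
  have hNr0 : 0 < Nr := by
    have : (Fintype.card ((Fin mr → Fin p) × (Fin p → Bool))) ≠ 0 :=
      have := hEr.to_type
      Fintype.card_ne_zero
    positivity
  have hκ : Nc⁻¹ * Nr⁻¹ ≠ 0 := by positivity
  have hP := curSrhtP_eq n p mc mr
  have hest := fun x (hx : x ∈ E) y (hy : y ∈ E') =>
    curUsrht_eq (X := X) (by omega) (by omega) hmc0 hmr0 hT hC hS hR hx hy
  -- the two sides use disjoint randomness, so a product event keeps them independent
  refine ⟨(E ×ˢ E').map (regroup _ _ _ _).toEmbedding, ?_, ?_, ?_⟩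
  · rw [eventProb, sum_congr rfl fun z _ => hP z, sum_const, card_map, card_product, nsmul_eq_mul]
    have h1 := (le_div_iff₀ hNc0).2 hPc
    have h2 := (le_div_iff₀ hNr0).2 hPr
    have h3 : (1 - δ / 2) * (1 - δ / 2) ≤ E.card / Nc * (E'.card / Nr) := by
      gcongr
      linarith
    have h4 : ((E.card * E'.card : ℕ) : ℝ) * (Nc⁻¹ * Nr⁻¹) = E.card / Nc * (E'.card / Nr) := by
      push_cast; ring
    rw [h4]
    nlinarith [sq_nonneg δ]
  · intro z hz
    obtain ⟨w, hw, rfl⟩ := mem_map.1 hz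
    obtain ⟨hw1, hw2⟩ := mem_product.1 hw
    obtain ⟨h1, h2, -⟩ := hest w.1 hw1 w.2 hw2
    exact ⟨h1, h2⟩
  · have hmean : condExp (curSrhtP n p mc mr) ((E ×ˢ E').map (regroup _ _ _ _).toEmbedding)
        (curUsrht Hn Hp X Cm Rm) =
        T⁻¹ * (((E.card : ℝ)⁻¹ • ∑ z ∈ E, pinvSketch Hn V z) * X *
          ((E'.card : ℝ)⁻¹ • ∑ z ∈ E', pinvSketch Hp W z)ᵀ) * (S⁻¹)ᵀ := by
      rw [condExp_of_const hκ hP, card_map, card_product, sum_map, sum_product,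
        ← average_two_sided]
      congr 1
      exact sum_congr rfl fun x hx => sum_congr rfl fun y hy => (hest x hx y hy).2.2
    rw [hmean, optCUR_factor hV hT hC hW hS hR, loss_factor hT hC hS hR, loss_factor hT hC hS hR]
    refine (loss_perturbation hV hW (average_mul_one hEc fun z hz => pinvSketch_mul hmc0 hz)
      (average_mul_one hEr fun z hz => pinvSketch_mul hmr0 hz) he0 he0' he1' hMe hLe X).trans ?_
    exact mul_le_mul_of_nonneg_right (pow_le_pow_left₀ (by positivity) (by linarith) 2)
      (sq_nonneg _)

end
end

section
/- Second moment of the sketched residual (identity used in the proof of Theorem 4.3): Let π be a sampling distribution with π i > 0 for all i, let U ∈ ℝ^{n×p} satisfy Uᵀ U = I_p, and let r ∈ ℝⁿ satisfy Uᵀ r = 0. Then E[‖Uᵀ S(ω)ᵀ S(ω) r‖²] = ∑_{i=1}^n ‖u_i‖² · r_i² / (m · π i), where u_iᵀ denotes the i-th row of U; equivalently, E[‖Uᵀ Sᵀ S r‖²] = rᵀ · diag(‖u_i‖²/(m · π i))_{1≤i≤n} · r. -/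
/-!
Each coordinate `k` of `Uᵀ Sᵀ S r` is a sum `∑ s, g (ω s)` of i.i.d. terms, where
`g i = U i k * r i / (m * π i)` (`sketch_coord`). These terms are centred, because their mean is
`(Uᵀ r) k / m = 0`, so the cross terms of the squared sum vanish in expectation and
`E[(∑ s, g (ω s))²] = m * E[g²]` (`expect_sum_sq`). Summing
`m * ∑ i, π i * g i ^ 2 = ∑ i, U i k ^ 2 * r i ^ 2 / (m * π i)` over `k` gives the claim.
-/

open Matrix Finset

noncomputable section

/-- Distinct draws are independent: a product of functions of the individual draws
has expectation the product of the expectations. -/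
lemma expect_prod {n m : ℕ} (π : Fin n → ℝ) (f : Fin m → Fin n → ℝ) :
    ∑ ω : Fin m → Fin n, samplingP π ω * ∏ s, f s (ω s) = ∏ s, ∑ i, π i * f s i := by
  simp only [samplingP, Fintype.prod_sum, Finset.prod_mul_distrib]

lemma expect_mul {n m : ℕ} (π : Fin n → ℝ) (hπ1 : ∑ i, π i = 1) (g : Fin n → ℝ)
    (hg : ∑ i, π i * g i = 0) (s t : Fin m) :
    ∑ ω : Fin m → Fin n, samplingP π ω * (g (ω s) * g (ω t))
      = if s = t then ∑ i, π i * g i ^ 2 else 0 := by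
  -- Each single factor is written as a product over all draws, equal to `1` off one index.
  have h := expect_prod π (fun u i => (if u = s then g i else 1) * (if u = t then g i else 1))
  simp only [Finset.prod_mul_distrib, Finset.prod_ite_eq', Finset.mem_univ, if_true] at h
  rw [h]
  split_ifs with hst
  · subst hst
    rw [Finset.prod_eq_single s]
    · simp [pow_two]
    · intro u _ hu
      simp [hu, hπ1]
    · simp
  · refine Finset.prod_eq_zero (Finset.mem_univ s) ?_
    simpa [hst] using hg

/-- The variance of a sum of `m` centred i.i.d. variables is `m` times the variance of one. -/
lemma expect_sum_sq {n m : ℕ} (π : Fin n → ℝ) (hπ1 : ∑ i, π i = 1) (g : Fin n → ℝ)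
    (hg : ∑ i, π i * g i = 0) :
    ∑ ω : Fin m → Fin n, samplingP π ω * ((∑ s, g (ω s)) * (∑ s, g (ω s)))
      = m * ∑ i, π i * g i ^ 2 := by
  simp_rw [Finset.sum_mul_sum]
  simp_rw [Finset.mul_sum (s := (univ : Finset (Fin m)))]
  rw [Finset.sum_comm]
  have h (s : Fin m) : ∑ ω : Fin m → Fin n, ∑ t, samplingP π ω * (g (ω s) * g (ω t))
      = ∑ i, π i * g i ^ 2 := by
    rw [Finset.sum_comm]
    simp_rw [expect_mul π hπ1 g hg]
    simp
  simp [h]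

lemma sketch_coord {n m p : ℕ} (π : Fin n → ℝ) (hπ : ∀ i, 0 < π i)
    (U : Matrix (Fin n) (Fin p) ℝ) (r : Fin n → ℝ) (ω : Fin m → Fin n) (k : Fin p) :
    (Uᵀ *ᵥ ((samplingS π ω)ᵀ *ᵥ (samplingS π ω *ᵥ r))) k
      = ∑ s, U (ω s) k * r (ω s) / (m * π (ω s)) := by
  have h1 : ∀ s, (samplingS π ω *ᵥ r) s = 1 / Real.sqrt (m * π (ω s)) * r (ω s) := by
    intro s
    simp [samplingS, Matrix.mulVec, dotProduct]
  have h2 : ∀ s, (samplingS π ω *ᵥ fun j => U j k) s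
      = 1 / Real.sqrt (m * π (ω s)) * U (ω s) k := by
    intro s
    simp [samplingS, Matrix.mulVec, dotProduct]
  -- Moving `Sᵀ` across the inner product turns the coordinate into `⟨S U_k, S r⟩`.
  have h3 : (Uᵀ *ᵥ ((samplingS π ω)ᵀ *ᵥ (samplingS π ω *ᵥ r))) k
      = (samplingS π ω *ᵥ fun j => U j k) ⬝ᵥ (samplingS π ω *ᵥ r) := by
    change (fun j => U j k) ⬝ᵥ ((samplingS π ω)ᵀ *ᵥ (samplingS π ω *ᵥ r)) = _
    rw [Matrix.dotProduct_mulVec, Matrix.vecMul_transpose]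
  rw [h3]
  refine Finset.sum_congr rfl fun s _ => ?_
  rw [h1, h2]
  have h0 : (0 : ℝ) ≤ m * π (ω s) := mul_nonneg (Nat.cast_nonneg m) (hπ _).le
  calc _ = U (ω s) k * r (ω s) / (Real.sqrt (m * π (ω s)) * Real.sqrt (m * π (ω s))) := by
        ring
    _ = _ := by rw [Real.mul_self_sqrt h0]

/-- **Second moment of the sketched residual.**  If `Uᵀ U = I_p` and `Uᵀ r = 0`,
then `E[‖Uᵀ Sᵀ S r‖²] = ∑ i ‖u_i‖² r_i² / (m π_i)`. -/
theorem sketched_residual_second_moment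
    {n m : ℕ} (hn : 0 < n) (hm : 0 < m)
    (π : Fin n → ℝ) (hπ : ∀ i, 0 < π i) (hπ1 : ∑ i, π i = 1)
    {p : ℕ} (U : Matrix (Fin n) (Fin p) ℝ) (hU : Uᵀ * U = 1)
    (r : Fin n → ℝ) (hr : Uᵀ *ᵥ r = 0) :
    ∑ ω : Fin m → Fin n, samplingP π ω *
        ((Uᵀ *ᵥ ((samplingS π ω)ᵀ *ᵥ (samplingS π ω *ᵥ r))) ⬝ᵥ
          (Uᵀ *ᵥ ((samplingS π ω)ᵀ *ᵥ (samplingS π ω *ᵥ r))))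
      = ∑ i, (U i ⬝ᵥ U i) * r i ^ 2 / (m * π i) := by
  have hm' : (m : ℝ) ≠ 0 := by exact_mod_cast hm.ne'
  have hπ' : ∀ i, π i ≠ 0 := fun i => (hπ i).ne'
  have hmean : ∀ k, ∑ i, π i * (U i k * r i / (m * π i)) = 0 := by
    intro k
    have hk : ∑ i, U i k * r i = 0 := congrFun hr k
    calc _ = ∑ i, U i k * r i / m := by
          refine Finset.sum_congr rfl fun i _ => ?_
          field_simp [hπ' i]
      _ = 0 := by rw [← Finset.sum_div, hk, zero_div]
  simp only [dotProduct, sketch_coord π hπ]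
  simp_rw [Finset.mul_sum (s := (univ : Finset (Fin p)))]
  rw [Finset.sum_comm]
  rw [Finset.sum_congr rfl fun k _ =>
    expect_sum_sq (m := m) π hπ1 (fun i => U i k * r i / (m * π i)) (hmean k)]
  simp_rw [Finset.mul_sum, Finset.sum_mul, Finset.sum_div]
  rw [Finset.sum_comm]
  refine Finset.sum_congr rfl fun i _ => Finset.sum_congr rfl fun k _ => ?_
  have := hπ' i
  field_simp

end
end
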